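/- There exist positive constants a0 < 1/2, β0 and K1 > 2, independent of the chain length N, such that, setting K2 := 4(2K1)^{2+8a0}/((1−2a0)⁴(1−a0)⁶), μ# := a(2+a), A1 := √(1+4a), A2 := √(1−2a), B := 1 − 3/(4β²) and D := K1 A1/B, the following holds: for the periodic chain of length N, if φ and ψ are homogeneous polynomials of degrees 2r and 2s with interaction lengths m and m' respectively, whose supports are disjoint at distance d, then for every β > β0 and 0 < a < a0, |⟨φψ⟩ − ⟨φ⟩⟨ψ⟩| ≤ K2 · D^{m+m'+2d+4} · μ#^d · [2^{r+s} r! s! / (A2² β)^{r+s}] · ‖φ‖ ‖ψ‖. -/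

import Mathlib

open MeasureTheory

/-- Phase space `ℝ^{2N}` of the chain: `z = (x, y)`. -/
abbrev Phase (N : ℕ) := (Fin N → ℝ) × (Fin N → ℝ)

/-- Klein–Gordon chain Hamiltonian
`H(x,y) = (1/2) Σ_j [y_j² + x_j² + a(x_j − x_{j−1})² + (1/2) x_j⁴]`
with periodic boundary conditions. -/
noncomputable def Ham (N : ℕ) (a : ℝ) (z : Phase N) : ℝ :=
  (1 / 2) * ∑ j : Fin N,
    ((z.2 j) ^ 2 + (z.1 j) ^ 2 + a * (z.1 j - z.1 ((finRotate N).symm j)) ^ 2 +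
      (1 / 2) * (z.1 j) ^ 4)

/-- Gibbs measure `dm = e^{−βH} dz / Z(β,a)`. -/
noncomputable def gibbs (N : ℕ) (a β : ℝ) : Measure (Phase N) :=
  (ENNReal.ofReal (∫ z : Phase N, Real.exp (-β * Ham N a z)))⁻¹ •
    MeasureTheory.volume.withDensity fun z => ENNReal.ofReal (Real.exp (-β * Ham N a z))

/-- Phase average `⟨X⟩ = ∫ X dm`. -/
noncomputable def pAvg (N : ℕ) (a β : ℝ) (X : Phase N → ℝ) : ℝ := ∫ z, X z ∂ gibbs N a β

/-- Phase variance `σ²[X] = ⟨X²⟩ − ⟨X⟩²`. -/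
noncomputable def pVar (N : ℕ) (a β : ℝ) (X : Phase N → ℝ) : ℝ :=
  pAvg N a β (fun z => X z ^ 2) - (pAvg N a β X) ^ 2

open MvPolynomial

/-- Polynomials in the `2N` phase-space variables: `Sum.inl l ↦ x_l`, `Sum.inr l ↦ y_l`. -/
abbrev Pol (N : ℕ) := MvPolynomial (Fin N ⊕ Fin N) ℝ

/-- Polynomial norm: the sum of the absolute values of the coefficients. -/
noncomputable def pnorm {N : ℕ} (f : Pol N) : ℝ :=
  ∑ d ∈ f.support, |coeff d f|

/-- Set of sites appearing (in `x` or `y`) with nonzero exponent in a monomial. -/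
def siteSupport {N : ℕ} (d : (Fin N ⊕ Fin N) →₀ ℕ) : Finset (Fin N) :=
  Finset.univ.filter fun l => d (Sum.inl l) ≠ 0 ∨ d (Sum.inr l) ≠ 0

/-- Gibbs average of (the evaluation of) a polynomial. -/
noncomputable def gAvg (N : ℕ) (a β : ℝ) (f : Pol N) : ℝ :=
  pAvg N a β fun z => MvPolynomial.eval (Sum.elim z.1 z.2) f

open scoped ENNReal

/-!
The Gibbs measure is a product of one-site probability measures reweighted by
`exp (β a ∑ x_j x_{j-1})`. Take two independent replicas `z`, `z'`. With `Z` the partition function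
and `w_j = exp (β a (x_j x_{j-1} + x'_j x'_{j-1}))`,
`2 Z² Cov(f, g) = ∫∫ (f z - f z') (g z - g z') ∏_j w_j`.
The supports of `f` and `g` cut the ring into two blocks and two gaps `G₁`, `G₂` of bonds. Expand
`w = 1 + (w - 1)` on the bonds of the gaps. If a term carries the factor `1` on a bond of each gap,
exchanging the replicas on the arc between these two bonds changes its sign, so it integrates to
zero. Hence only the terms with `w - 1` on all of `G₁` or on all of `G₂` survive, and each factor
`|w - 1| ≤ |s| exp |s|`, `s = β a (x_j x_{j-1} + x'_j x'_{j-1})`, contributes a power of `a`.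

On the arc covered by the `w - 1` and by the blocks the dominating weight factorizes over the
sites; the rest of the ring enters through `𝔼[exp (β x_j² / 8)] ≤ 256`, proved by a maximum
principle along the chain. Inside the blocks one can only afford a Gaussian factor
`exp (β a x² / 2)` per bond, since otherwise the constant `1 - 2 a` in the moments would be lost;
this costs `a ^ (-1/2)` at each end of a gap, which is made up for by the number of bonds in a gap
exceeding the number of its sites.
-/

/-! ### Elementary inequalities -/

lemma gamma_add_half_le_two_mul {x : ℝ} (hx : 0 ≤ x) :
    Real.Gamma (x + 1 / 2) ≤ 2 * Real.Gamma (x + 1) := by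
  have hΓ : 0 < Real.Gamma (x + 1) := Real.Gamma_pos_of_pos (by positivity)
  have hconv : Real.Gamma (x + 3 / 2) ≤ Real.Gamma (x + 1) * √(x + 1) := by
    have h := Real.Gamma_mul_add_mul_le_rpow_Gamma_mul_rpow_Gamma (s := x + 1) (t := x + 1 + 1)
      (a := 1 / 2) (b := 1 / 2) (by positivity) (by positivity) (by norm_num) (by norm_num)
      (by norm_num)
    rw [Real.Gamma_add_one (s := x + 1) (by positivity), ← Real.sqrt_eq_rpow, ← Real.sqrt_eq_rpow,
      Real.sqrt_mul (by positivity), mul_left_comm, Real.mul_self_sqrt hΓ.le, mul_comm (√_)] at h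
    convert h using 2
    ring
  have hrec : Real.Gamma (x + 3 / 2) = (x + 1 / 2) * Real.Gamma (x + 1 / 2) := by
    rw [← Real.Gamma_add_one (by positivity)]
    congr 1
    ring
  have hsqrt : √(x + 1) ≤ 2 * x + 1 := Real.sqrt_le_iff.2 ⟨by positivity, by nlinarith⟩
  have : (x + 1 / 2) * Real.Gamma (x + 1 / 2) ≤ (x + 1 / 2) * (2 * Real.Gamma (x + 1)) :=
    calc (x + 1 / 2) * Real.Gamma (x + 1 / 2) ≤ Real.Gamma (x + 1) * √(x + 1) := hrec ▸ hconv
      _ ≤ Real.Gamma (x + 1) * (2 * x + 1) := by gcongr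
      _ = (x + 1 / 2) * (2 * Real.Gamma (x + 1)) := by ring
  exact le_of_mul_le_mul_left this (by positivity)

lemma gamma_add_one_mul_gamma_add_one_le {x y : ℝ} (hx : 0 ≤ x) (hy : 0 ≤ y) :
    Real.Gamma (x + 1) * Real.Gamma (y + 1) ≤ Real.Gamma (x + y + 1) := by
  rcases hx.eq_or_lt with rfl | hx
  · simp
  rcases hy.eq_or_lt with rfl | hy
  · simp
  have hΓ : 0 < Real.Gamma (x + y + 1) := Real.Gamma_pos_of_pos (by positivity)
  have logConvex {u v : ℝ} (hu : 0 < u) (hv : 0 < v) (huv : u + v = x + y) :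
      Real.Gamma (u + 1) ≤ Real.Gamma (x + y + 1) ^ (u / (x + y)) := by
    have h := Real.Gamma_mul_add_mul_le_rpow_Gamma_mul_rpow_Gamma (s := 1) (t := x + y + 1)
      (a := v / (x + y)) (b := u / (x + y)) (by positivity) (by positivity) (by positivity)
      (by positivity) (by rw [← add_div, add_comm, huv, div_self (by positivity)])
    rw [Real.Gamma_one, Real.one_rpow, one_mul] at h
    convert h using 2
    field_simp
    linarith
  calc Real.Gamma (x + 1) * Real.Gamma (y + 1)
      ≤ Real.Gamma (x + y + 1) ^ (x / (x + y)) * Real.Gamma (x + y + 1) ^ (y / (x + y)) :=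
        mul_le_mul (logConvex hx hy rfl) (logConvex hy hx (add_comm y x))
          (Real.Gamma_pos_of_pos (by positivity)).le (by positivity)
    _ = Real.Gamma (x + y + 1) := by
        rw [← Real.rpow_add hΓ, ← add_div, div_self (by positivity), Real.rpow_one]

lemma prod_gamma_add_one_le {ι : Type*} (s : Finset ι) {f : ι → ℝ} (hf : ∀ i, 0 ≤ f i) :
    ∏ i ∈ s, Real.Gamma (f i + 1) ≤ Real.Gamma (∑ i ∈ s, f i + 1) := by
  classical
  induction s using Finset.induction_on with
  | empty => simp
  | insert i s hi ih =>
    rw [Finset.prod_insert hi, Finset.sum_insert hi]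
    exact (mul_le_mul_of_nonneg_left ih (Real.Gamma_pos_of_pos (by linarith [hf i])).le).trans
      (gamma_add_one_mul_gamma_add_one_le (hf i) (Finset.sum_nonneg fun j _ => hf j))

lemma exp_two_le_eight : Real.exp 2 ≤ 8 := by
  have h : Real.exp 2 = Real.exp 1 ^ 2 := by rw [← Real.exp_nat_mul]; norm_num
  nlinarith [Real.exp_one_lt_d9, Real.exp_pos 1]

/-! ### The single-site measure -/

lemma isNegInvariant_tilted {G : Type*} [MeasurableSpace G] [InvolutiveNeg G] [MeasurableNeg G]
    {μ : Measure G} [μ.IsNegInvariant] {f : G → ℝ} (hf : ∀ x, f (-x) = f x) :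
    (μ.tilted f).IsNegInvariant := by
  refine ⟨Measure.ext fun s hs => ?_⟩
  rw [Measure.neg_apply, tilted_apply' _ _ hs.neg, tilted_apply' _ _ hs,
    ← (Measure.measurePreserving_neg μ).setLIntegral_comp_preimage_emb
      (MeasurableEquiv.neg G).measurableEmbedding _ s]
  simp only [hf, Set.neg_preimage]

lemma one_le_lintegral_exp_mul (μ : Measure ℝ) [IsProbabilityMeasure μ] [μ.IsNegInvariant]
    (h : ℝ) : 1 ≤ ∫⁻ x, ENNReal.ofReal (Real.exp (h * x)) ∂μ := by
  have hcosh : 2 ≤ 2 * ∫⁻ x, ENNReal.ofReal (Real.exp (h * x)) ∂μ :=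
    calc (2 : ℝ≥0∞) = ∫⁻ _, 2 ∂μ := by simp
      _ ≤ ∫⁻ x, (ENNReal.ofReal (Real.exp (h * x)) + ENNReal.ofReal (Real.exp (h * -x))) ∂μ := by
        refine lintegral_mono fun x => ?_
        rw [← ENNReal.ofReal_add (by positivity) (by positivity), ← ENNReal.ofReal_ofNat 2]
        refine ENNReal.ofReal_le_ofReal ?_
        linarith [Real.add_one_le_exp (h * x), Real.add_one_le_exp (h * -x)]
      _ = 2 * ∫⁻ x, ENNReal.ofReal (Real.exp (h * x)) ∂μ := by
        rw [lintegral_add_left (by fun_prop),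
          lintegral_neg_eq_self (fun x => ENNReal.ofReal (Real.exp (h * x))), two_mul]
  by_contra! hlt
  have := ENNReal.mul_lt_mul_right two_ne_zero ENNReal.ofNat_ne_top hlt
  rw [mul_one] at this
  exact this.not_ge hcosh

lemma lintegral_abs_pow_mul_exp_neg_mul_sq (k : ℕ) {b : ℝ} (hb : 0 < b) :
    ∫⁻ x : ℝ, ENNReal.ofReal (|x| ^ k * Real.exp (-b * x ^ 2)) =
      ENNReal.ofReal (√b⁻¹ ^ (k + 1) * Real.Gamma (k / 2 + 1 / 2)) := by
  have hk : (-1 : ℝ) < k := by linarith [k.cast_nonneg (α := ℝ)]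
  have hint : Integrable fun x : ℝ => |x| ^ k * Real.exp (-b * x ^ 2) := by
    refine (integrable_rpow_mul_exp_neg_mul_sq hb hk).norm.congr (.of_forall fun x => ?_)
    simp only [Real.rpow_natCast, norm_mul, norm_pow, Real.norm_eq_abs, Real.abs_exp]
  rw [← ofReal_integral_eq_lintegral_ofReal hint (.of_forall fun x => by positivity)]
  congr 1
  have habs := integral_comp_abs (f := fun x : ℝ => x ^ k * Real.exp (-b * x ^ 2))
  have hpos := integral_rpow_mul_exp_neg_mul_rpow two_pos hk hb
  simp only [sq_abs] at habs
  simp only [Real.rpow_natCast, Real.rpow_two] at hpos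
  have hsqrt : √b⁻¹ ^ (k + 1) = b ^ (-((k : ℝ) + 1) / 2) := by
    rw [Real.sqrt_eq_rpow, ← Real.rpow_natCast, ← Real.rpow_mul (by positivity),
      Real.inv_rpow hb.le, ← Real.rpow_neg hb.le]
    congr 1
    push_cast
    ring
  rw [habs, hpos, hsqrt, ← add_div]
  ring

/-- The normalised measure `∝ exp(-β (b x² / 2 + c x⁴ / 4)) dx` on `ℝ`: the Gibbs measure of one
uncoupled coordinate, in which `b` collects all quadratic self-energies. -/
noncomputable def quarticGibbs (β b c : ℝ) : Measure ℝ :=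
  volume.tilted fun x => -β * (b * x ^ 2 / 2 + c * x ^ 4 / 4)

section QuarticGibbs

variable {β b c : ℝ}

lemma integrable_exp_quartic (hβ : 0 < β) (hb : 0 < b) (hc : 0 ≤ c) :
    Integrable fun x : ℝ => Real.exp (-β * (b * x ^ 2 / 2 + c * x ^ 4 / 4)) := by
  refine (integrable_exp_neg_mul_sq (show 0 < β * b / 2 by positivity)).mono'
    (by fun_prop) (.of_forall fun x => ?_)
  rw [Real.norm_eq_abs, Real.abs_exp, Real.exp_le_exp]
  have : 0 ≤ β * (c * x ^ 4) := by positivity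
  nlinarith

lemma isProbabilityMeasure_quarticGibbs (hβ : 0 < β) (hb : 0 < b) (hc : 0 ≤ c) :
    IsProbabilityMeasure (quarticGibbs β b c) :=
  isProbabilityMeasure_tilted (integrable_exp_quartic hβ hb hc)

lemma isNegInvariant_quarticGibbs : (quarticGibbs β b c).IsNegInvariant :=
  isNegInvariant_tilted fun x => by rw [neg_sq, Even.neg_pow (by decide)]

lemma div_sqrt_le_integral_exp_quartic (hβ : 1 ≤ β) (hb : 0 < b) (hb2 : b ≤ 2) (hc : 0 ≤ c)
    (hc1 : c ≤ 1) :
    2 * Real.exp (-2) / √β ≤ ∫ x : ℝ, Real.exp (-β * (b * x ^ 2 / 2 + c * x ^ 4 / 4)) := by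
  have hβ0 : 0 < β := by linarith
  have hint := integrable_exp_quartic hβ0 hb hc
  have hlow : ∀ x ∈ Set.Icc (-(1 / √β)) (1 / √β),
      Real.exp (-2) ≤ Real.exp (-β * (b * x ^ 2 / 2 + c * x ^ 4 / 4)) := by
    intro x hx
    have hx2 : β * x ^ 2 ≤ 1 := by
      have h := pow_le_pow_left₀ (abs_nonneg x) (abs_le.2 hx) 2
      rw [sq_abs, div_pow, Real.sq_sqrt hβ0.le, one_pow, le_div_iff₀' hβ0] at h
      exact h
    have hx4 : β * x ^ 4 ≤ 1 := by nlinarith [sq_nonneg x, sq_nonneg (x ^ 2)]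
    have hbx : b * (β * x ^ 2) ≤ 2 * 1 := mul_le_mul hb2 hx2 (by positivity) (by norm_num)
    have hcx : c * (β * x ^ 4) ≤ 1 * 1 := mul_le_mul hc1 hx4 (by positivity) (by norm_num)
    exact Real.exp_le_exp.2 (by nlinarith)
  calc 2 * Real.exp (-2) / √β = ∫ _ in Set.Icc (-(1 / √β)) (1 / √β), Real.exp (-2) := by
        have hpos : 0 ≤ 1 / √β := by positivity
        rw [setIntegral_const, Measure.real, Real.volume_Icc,
          ENNReal.toReal_ofReal (by linarith), smul_eq_mul]
        ring
    _ ≤ ∫ x in Set.Icc (-(1 / √β)) (1 / √β), Real.exp (-β * (b * x ^ 2 / 2 + c * x ^ 4 / 4)) :=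
        setIntegral_mono_on (integrableOn_const (by simp)) hint.integrableOn measurableSet_Icc hlow
    _ ≤ _ := setIntegral_le_integral hint (.of_forall fun x => (Real.exp_pos _).le)

lemma quartic_density_mul_le (hβ : 1 ≤ β) (hb : 0 < b) (hb2 : b ≤ 2) (hc : 0 ≤ c) (hc1 : c ≤ 1)
    {κ l : ℝ} (hκ : l ≤ b - 2 * κ) (k : ℕ) (x : ℝ) :
    Real.exp (-β * (b * x ^ 2 / 2 + c * x ^ 4 / 4)) /
        (∫ t : ℝ, Real.exp (-β * (b * t ^ 2 / 2 + c * t ^ 4 / 4))) *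
        (|x| ^ k * Real.exp (κ * β * x ^ 2)) ≤
      4 * √β * (|x| ^ k * Real.exp (-(β * l / 2) * x ^ 2)) := by
  have hs : 0 < √β := Real.sqrt_pos.2 (by linarith)
  have hexp : Real.exp (-β * (b * x ^ 2 / 2 + c * x ^ 4 / 4)) * Real.exp (κ * β * x ^ 2) ≤
      Real.exp (-(β * l / 2) * x ^ 2) := by
    rw [← Real.exp_add, Real.exp_le_exp]
    have hquart : 0 ≤ β * (c * x ^ 4) := by positivity
    have hquad : 0 ≤ (β * x ^ 2) * (b - 2 * κ - l) := mul_nonneg (by positivity) (by linarith)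
    nlinarith
  have hZ : (∫ t : ℝ, Real.exp (-β * (b * t ^ 2 / 2 + c * t ^ 4 / 4)))⁻¹ ≤ 4 * √β := by
    refine (inv_anti₀ (by positivity)
      (div_sqrt_le_integral_exp_quartic hβ hb hb2 hc hc1)).trans ?_
    rw [Real.exp_neg, inv_div, div_le_iff₀ (by positivity)]
    field_simp
    linarith [exp_two_le_eight]
  rw [div_eq_mul_inv, mul_comm (Real.exp _), mul_assoc, mul_left_comm (Real.exp _)]
  gcongr

lemma lintegral_abs_pow_mul_exp_quarticGibbs_le (hβ : 1 ≤ β) (hb : 0 < b) (hb2 : b ≤ 2)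
    (hc : 0 ≤ c) (hc1 : c ≤ 1) {κ l : ℝ} (hl : 1 / 2 ≤ l) (hκ : l ≤ b - 2 * κ) (k : ℕ) :
    ∫⁻ x, ENNReal.ofReal (|x| ^ k * Real.exp (κ * β * x ^ 2)) ∂(quarticGibbs β b c) ≤
      ENNReal.ofReal (16 * Real.Gamma (k / 2 + 1) * √(2 / (β * l)) ^ k) := by
  have : 0 < √β := Real.sqrt_pos.2 (by linarith)
  rw [quarticGibbs, lintegral_tilted]
  simp only [← ENNReal.ofReal_mul (div_nonneg (Real.exp_pos _).le
    (integral_nonneg fun _ => (Real.exp_pos _).le))]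
  refine (lintegral_mono fun x => ENNReal.ofReal_le_ofReal
    (quartic_density_mul_le hβ hb hb2 hc hc1 hκ k x)).trans ?_
  simp only [ENNReal.ofReal_mul (show 0 ≤ 4 * √β by positivity)]
  rw [lintegral_const_mul _ (by fun_prop),
    lintegral_abs_pow_mul_exp_neg_mul_sq k (by positivity), ← ENNReal.ofReal_mul (by positivity),
    inv_div]
  refine ENNReal.ofReal_le_ofReal ?_
  have hsqrt : √(2 / (β * l)) ≤ 2 / √β := by
    rw [Real.sqrt_le_left (by positivity), div_pow, Real.sq_sqrt (by linarith),
      div_le_div_iff₀ (by positivity) (by positivity)]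
    nlinarith
  calc 4 * √β * (√(2 / (β * l)) ^ (k + 1) * Real.Gamma (k / 2 + 1 / 2))
      = 4 * √β * (√(2 / (β * l)) ^ k * √(2 / (β * l)) * Real.Gamma (k / 2 + 1 / 2)) := by
        rw [pow_succ]
    _ ≤ 4 * √β * (√(2 / (β * l)) ^ k * (2 / √β) * (2 * Real.Gamma (k / 2 + 1))) := by
        gcongr
        exact gamma_add_half_le_two_mul (by positivity)
    _ = 16 * Real.Gamma (k / 2 + 1) * √(2 / (β * l)) ^ k := by field_simp; ring

end QuarticGibbs

/-! ### Exponential weights -/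

/-- The exponential with values in `ℝ≥0∞`, so that weights can be multiplied and integrated without
nonnegativity side conditions. -/
noncomputable def eexp (t : ℝ) : ℝ≥0∞ := ENNReal.ofReal (Real.exp t)

lemma eexp_add (s t : ℝ) : eexp (s + t) = eexp s * eexp t := by
  rw [eexp, Real.exp_add, ENNReal.ofReal_mul (Real.exp_pos s).le, eexp, eexp]

lemma eexp_sum {ι : Type*} (s : Finset ι) (f : ι → ℝ) :
    eexp (∑ i ∈ s, f i) = ∏ i ∈ s, eexp (f i) := by
  simp only [eexp, Real.exp_sum]
  exact ENNReal.ofReal_prod_of_nonneg fun i _ => (Real.exp_pos _).le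

lemma eexp_le_eexp {s t : ℝ} (h : s ≤ t) : eexp s ≤ eexp t :=
  ENNReal.ofReal_le_ofReal (Real.exp_le_exp.2 h)

lemma one_le_eexp {t : ℝ} (ht : 0 ≤ t) : 1 ≤ eexp t :=
  ENNReal.one_le_ofReal.2 (Real.one_le_exp ht)

@[fun_prop]
lemma measurable_eexp : Measurable eexp := Real.measurable_exp.ennreal_ofReal

lemma enorm_exp (t : ℝ) : ‖Real.exp t‖ₑ = eexp t := Real.enorm_of_nonneg (Real.exp_pos t).le

lemma enorm_exp_sub_one_le (t : ℝ) : ‖Real.exp t - 1‖ₑ ≤ ENNReal.ofReal (|t| * Real.exp |t|) := by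
  rw [Real.enorm_eq_ofReal_abs]
  refine ENNReal.ofReal_le_ofReal ?_
  have h := Complex.norm_exp_sub_sum_le_norm_mul_exp (t : ℂ) 1
  simp only [Finset.range_one, Finset.sum_singleton, pow_zero, Nat.factorial_zero, Nat.cast_one,
    div_one, pow_one, Complex.norm_real, Real.norm_eq_abs] at h
  exact_mod_cast h

lemma enorm_exp_sub_one_le_eexp_abs (t : ℝ) : ‖Real.exp t - 1‖ₑ ≤ eexp |t| := by
  rw [Real.enorm_eq_ofReal_abs]
  refine ENNReal.ofReal_le_ofReal (abs_le.2 ⟨?_, ?_⟩)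
  · linarith [Real.exp_pos t, Real.one_le_exp (abs_nonneg t)]
  · linarith [Real.exp_le_exp.2 (le_abs_self t)]

/-- The weight `exp(β r x² / 2)` of a site `(x, y)`; `r` measures which fraction of the on-site
confinement is spent. -/
noncomputable def quadWeight (β r : ℝ) (y : ℝ × ℝ) : ℝ≥0∞ := eexp (β * r * y.1 ^ 2 / 2)

section QuadWeight

variable {β r s : ℝ}

@[fun_prop]
lemma measurable_quadWeight : Measurable (quadWeight β r) := by
  unfold quadWeight
  fun_prop

lemma quadWeight_mul (y : ℝ × ℝ) :
    quadWeight β r y * quadWeight β s y = quadWeight β (r + s) y := by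
  rw [quadWeight, quadWeight, ← eexp_add, quadWeight]
  congr 1
  ring

lemma quadWeight_le_quadWeight (hβ : 0 ≤ β) (hrs : r ≤ s) (y : ℝ × ℝ) :
    quadWeight β r y ≤ quadWeight β s y :=
  eexp_le_eexp (by gcongr)

lemma one_le_quadWeight (hβ : 0 ≤ β) (hr : 0 ≤ r) (y : ℝ × ℝ) : 1 ≤ quadWeight β r y :=
  one_le_eexp (by positivity)

end QuadWeight

/-- The moment bounds on a single-site probability measure `ν` for the pair `(x, y)` from which
the decay of correlations follows: `a` is the coupling constant, `β` the inverse temperature and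
`Λ` the scale of the moments. -/
structure HasSiteBounds (ν : Measure (ℝ × ℝ)) (a β Λ : ℝ) : Prop where
  isProbabilityMeasure : IsProbabilityMeasure ν
  coupling_pos : 0 < a
  coupling_le : a ≤ 1 / 16
  beta_pos : 0 < β
  scale_nonneg : 0 ≤ Λ
  one_le_lintegral_eexp : ∀ h : ℝ, 1 ≤ ∫⁻ y, eexp (h * y.1) ∂ν
  lintegral_quadWeight_half_le : ∫⁻ y, quadWeight β (1 / 2) y ∂ν ≤ 16
  lintegral_moment_le : ∀ k l : ℕ,
    ∫⁻ y, ‖y.1‖ₑ ^ k * ‖y.2‖ₑ ^ l * quadWeight β (4 * a) y ∂ν ≤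
      ENNReal.ofReal (256 * (Real.Gamma (((k + l : ℕ) : ℝ) / 2 + 1) * Λ ^ (k + l)))

namespace HasSiteBounds

variable {ν : Measure (ℝ × ℝ)} {a β Λ : ℝ}

lemma lintegral_quadWeight_le (hν : HasSiteBounds ν a β Λ) {r : ℝ} (hr : r ≤ 1 / 2) :
    ∫⁻ y, quadWeight β r y ∂ν ≤ 16 :=
  (lintegral_mono fun y => quadWeight_le_quadWeight hν.beta_pos.le hr y).trans
    hν.lintegral_quadWeight_half_le

lemma lintegral_quadWeight_mul_eexp_le (hν : HasSiteBounds ν a β Λ) (h : ℝ) :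
    ∫⁻ y, quadWeight β (1 / 4) y * eexp (h * y.1) ∂ν ≤ 16 * eexp (2 * h ^ 2 / β) := by
  have hβ := hν.beta_pos
  calc ∫⁻ y, quadWeight β (1 / 4) y * eexp (h * y.1) ∂ν
      ≤ ∫⁻ y, quadWeight β (1 / 2) y * eexp (2 * h ^ 2 / β) ∂ν := by
        refine lintegral_mono fun y => ?_
        rw [quadWeight, quadWeight, ← eexp_add, ← eexp_add]
        have hsq : 0 ≤ (β * y.1 / 4 - h) ^ 2 * (2 / β) := by positivity
        have hexpand : (β * y.1 / 4 - h) ^ 2 * (2 / β) =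
            β * y.1 ^ 2 / 8 - h * y.1 + 2 * h ^ 2 / β := by
          field_simp
          ring
        exact eexp_le_eexp (by linarith)
    _ = (∫⁻ y, quadWeight β (1 / 2) y ∂ν) * eexp (2 * h ^ 2 / β) :=
        lintegral_mul_const _ (by fun_prop)
    _ ≤ 16 * eexp (2 * h ^ 2 / β) := by
        gcongr
        exact hν.lintegral_quadWeight_half_le

end HasSiteBounds

/-- The single-site measure of the Klein–Gordon chain: the Gibbs measure of one site whose
neighbours are pinned at `0`. -/
noncomputable def siteGibbs (a β : ℝ) : Measure (ℝ × ℝ) :=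
  (quarticGibbs β (1 + 2 * a) 1).prod (quarticGibbs β 1 0)

/-- The square root of `2 / (β (1 - 2a))`, the scale of one coordinate in the moment bounds. -/
noncomputable def siteScale (a β : ℝ) : ℝ := √(2 / (β * (1 - 2 * a)))

section SiteGibbs

variable {a β : ℝ}

lemma lintegral_mul_siteGibbs (hβ : 0 < β) {f g : ℝ → ℝ≥0∞} (hf : Measurable f)
    (hg : Measurable g) :
    ∫⁻ y, f y.1 * g y.2 ∂(siteGibbs a β) =
      (∫⁻ x, f x ∂(quarticGibbs β (1 + 2 * a) 1)) * ∫⁻ x, g x ∂(quarticGibbs β 1 0) := by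
  have := isProbabilityMeasure_quarticGibbs hβ one_pos le_rfl
  exact lintegral_prod_mul hf.aemeasurable hg.aemeasurable

lemma lintegral_fst_siteGibbs (hβ : 0 < β) {f : ℝ → ℝ≥0∞} (hf : Measurable f) :
    ∫⁻ y, f y.1 ∂(siteGibbs a β) = ∫⁻ x, f x ∂(quarticGibbs β (1 + 2 * a) 1) := by
  have := isProbabilityMeasure_quarticGibbs hβ one_pos le_rfl
  simpa using lintegral_mul_siteGibbs (a := a) hβ hf (measurable_const (a := (1 : ℝ≥0∞)))

lemma isProbabilityMeasure_siteGibbs (hβ : 0 < β) (ha : 0 < a) :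
    IsProbabilityMeasure (siteGibbs a β) := by
  have := isProbabilityMeasure_quarticGibbs (b := 1 + 2 * a) hβ (by positivity) zero_le_one
  have := isProbabilityMeasure_quarticGibbs hβ one_pos le_rfl
  unfold siteGibbs
  infer_instance

lemma lintegral_moment_siteGibbs_le (hβ : 1 ≤ β) (ha : 0 < a) (ha4 : a ≤ 1 / 4) (k l : ℕ) :
    ∫⁻ y, ‖y.1‖ₑ ^ k * ‖y.2‖ₑ ^ l * quadWeight β (4 * a) y ∂(siteGibbs a β) ≤
      ENNReal.ofReal
        (256 * (Real.Gamma (((k + l : ℕ) : ℝ) / 2 + 1) * siteScale a β ^ (k + l))) := by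
  have hx := lintegral_abs_pow_mul_exp_quarticGibbs_le (b := 1 + 2 * a) (c := 1) hβ (by positivity)
    (by linarith) zero_le_one le_rfl (κ := 2 * a) (l := 1 - 2 * a) (by linarith) (by linarith) k
  have hy := lintegral_abs_pow_mul_exp_quarticGibbs_le (b := 1) (c := 0) hβ one_pos (by norm_num)
    le_rfl zero_le_one (κ := 0) (l := 1 - 2 * a) (by linarith) (by linarith) l
  have hsplit : ∀ y : ℝ × ℝ, ‖y.1‖ₑ ^ k * ‖y.2‖ₑ ^ l * quadWeight β (4 * a) y =
      ENNReal.ofReal (|y.1| ^ k * Real.exp (2 * a * β * y.1 ^ 2)) *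
        ENNReal.ofReal (|y.2| ^ l * Real.exp (0 * β * y.2 ^ 2)) := by
    intro y
    rw [quadWeight, eexp, zero_mul, zero_mul, Real.exp_zero, mul_one,
      ENNReal.ofReal_mul (by positivity), ENNReal.ofReal_pow (by positivity),
      ENNReal.ofReal_pow (by positivity), Real.enorm_eq_ofReal_abs, Real.enorm_eq_ofReal_abs,
      show β * (4 * a) * y.1 ^ 2 / 2 = 2 * a * β * y.1 ^ 2 by ring]
    ring
  have hΛ : 0 ≤ siteScale a β := Real.sqrt_nonneg _
  simp only [hsplit]
  rw [lintegral_mul_siteGibbs (by linarith)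
    (f := fun x => ENNReal.ofReal (|x| ^ k * Real.exp (2 * a * β * x ^ 2)))
    (g := fun x => ENNReal.ofReal (|x| ^ l * Real.exp (0 * β * x ^ 2))) (by fun_prop) (by fun_prop)]
  refine (mul_le_mul' hx hy).trans ?_
  rw [← ENNReal.ofReal_mul (by positivity)]
  refine ENNReal.ofReal_le_ofReal ?_
  have hΓle := gamma_add_one_mul_gamma_add_one_le (x := (k : ℝ) / 2) (y := (l : ℝ) / 2)
    (by positivity) (by positivity)
  rw [Nat.cast_add, add_div, pow_add]
  calc _ = 256 * ((Real.Gamma (k / 2 + 1) * Real.Gamma (l / 2 + 1)) *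
        (siteScale a β ^ k * siteScale a β ^ l)) := by rw [siteScale]; ring
    _ ≤ _ := by gcongr

lemma hasSiteBounds_siteGibbs (hβ : 1 ≤ β) (ha : 0 < a) (ha16 : a ≤ 1 / 16) :
    HasSiteBounds (siteGibbs a β) a β (siteScale a β) where
  isProbabilityMeasure := isProbabilityMeasure_siteGibbs (by linarith) ha
  coupling_pos := ha
  coupling_le := ha16
  beta_pos := by linarith
  scale_nonneg := Real.sqrt_nonneg _
  one_le_lintegral_eexp h := by
    have := isProbabilityMeasure_quarticGibbs (β := β) (b := 1 + 2 * a) (by linarith)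
      (by positivity) zero_le_one
    have := isNegInvariant_quarticGibbs (β := β) (b := 1 + 2 * a) (c := 1)
    rw [lintegral_fst_siteGibbs (f := fun x => eexp (h * x)) (by linarith) (by fun_prop)]
    exact one_le_lintegral_exp_mul _ h
  lintegral_quadWeight_half_le := by
    have h := lintegral_abs_pow_mul_exp_quarticGibbs_le (b := 1 + 2 * a) (c := 1) hβ
      (by positivity) (by linarith) zero_le_one le_rfl (κ := 1 / 4) (l := 1 / 2) le_rfl
      (by linarith) 0
    simp only [pow_zero, one_mul, Nat.cast_zero, zero_div, zero_add, Real.Gamma_one, mul_one,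
      ENNReal.ofReal_ofNat] at h
    unfold quadWeight eexp
    rw [lintegral_fst_siteGibbs (f := fun x => ENNReal.ofReal (Real.exp (β * (1 / 2) * x ^ 2 / 2)))
      (by linarith) (by fun_prop)]
    convert h using 5
    ring
  lintegral_moment_le := lintegral_moment_siteGibbs_le hβ ha (by linarith)

end SiteGibbs

/-! ### Product measures -/

section ProductMeasure

variable {ι : Type*} [Fintype ι]

lemma lintegral_pi_le_of_forall_update [DecidableEq ι] {X : ι → Type*}
    [∀ i, MeasurableSpace (X i)]
    {μ : ∀ i, Measure (X i)} [∀ i, SigmaFinite (μ i)] (i : ι) {f g : (∀ i, X i) → ℝ≥0∞}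
    (hf : Measurable f) (hg : Measurable g)
    (h : ∀ z, ∫⁻ y, f (Function.update z i y) ∂μ i ≤ ∫⁻ y, g (Function.update z i y) ∂μ i) :
    ∫⁻ z, f z ∂Measure.pi μ ≤ ∫⁻ z, g z ∂Measure.pi μ := by
  refine lintegral_le_of_lmarginal_le {i} hf hg fun z => ?_
  simpa only [lmarginal_singleton] using h z

lemma lintegral_pi_prod_mul_of_dependsOn {X : ι → Type*} [∀ i, MeasurableSpace (X i)]
    {μ : ∀ i, Measure (X i)} [∀ i, IsProbabilityMeasure (μ i)] (S : Finset ι)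
    {g : ∀ i, X i → ℝ≥0∞} (hg : ∀ i, Measurable (g i)) {F : (∀ i, X i) → ℝ≥0∞} (hF : Measurable F)
    (hFS : DependsOn F (S : Set ι)ᶜ) :
    ∫⁻ z, (∏ i ∈ S, g i (z i)) * F z ∂Measure.pi μ =
      (∏ i ∈ S, ∫⁻ y, g i y ∂μ i) * ∫⁻ z, F z ∂Measure.pi μ := by
  classical
  induction S using Finset.induction_on with
  | empty => simp
  | insert i S hi ih =>
    rw [Finset.prod_insert hi, mul_assoc,
      ← ih (hFS.mono (Set.compl_subset_compl.2 (by simp))), ← lintegral_const_mul _ (by fun_prop)]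
    refine lintegral_eq_of_lmarginal_eq {i} (by fun_prop) (by fun_prop) (funext fun z => ?_)
    have hF_update (y : X i) : F (Function.update z i y) = F z :=
      hFS fun j hj => Function.update_of_ne (by rintro rfl; simp at hj) _ _
    have hprod_update (y : X i) :
        ∏ j ∈ S, g j (Function.update z i y j) = ∏ j ∈ S, g j (z j) :=
      Finset.prod_congr rfl fun j hj => by
        rw [Function.update_of_ne (ne_of_mem_of_not_mem hj hi)]
    simp only [lmarginal_singleton, Finset.prod_insert hi, hF_update, hprod_update,
      Function.update_self, mul_assoc, lintegral_mul_const _ (hg i), lintegral_const, measure_univ,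
      mul_one]

end ProductMeasure

/-! ### Replicas -/

section Replica

variable {ι X : Type*} [DecidableEq ι]

/-- The exchange of two copies (replicas) of a family of variables on the index set `A`. -/
def replicaSwap (A : Finset ι) (Z : (ι → X) × (ι → X)) : (ι → X) × (ι → X) :=
  (A.piecewise Z.2 Z.1, A.piecewise Z.1 Z.2)

/-- The difference of the values of an observable on two replicas. -/
def replicaDiff (f : (ι → X) → ℝ) (Z : (ι → X) × (ι → X)) : ℝ := f Z.1 - f Z.2

lemma replicaDiff_replicaSwap_of_subset {f : (ι → X) → ℝ} {S A : Finset ι}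
    (hf : DependsOn f S) (hSA : S ⊆ A) (Z : (ι → X) × (ι → X)) :
    replicaDiff f (replicaSwap A Z) = -replicaDiff f Z := by
  have h₁ : f (A.piecewise Z.2 Z.1) = f Z.2 := hf fun i hi => A.piecewise_eq_of_mem _ _ (hSA hi)
  have h₂ : f (A.piecewise Z.1 Z.2) = f Z.1 := hf fun i hi => A.piecewise_eq_of_mem _ _ (hSA hi)
  simp only [replicaDiff, replicaSwap, h₁, h₂, neg_sub]

lemma replicaDiff_replicaSwap_of_disjoint {f : (ι → X) → ℝ} {S A : Finset ι}
    (hf : DependsOn f S) (hSA : Disjoint S A) (Z : (ι → X) × (ι → X)) :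
    replicaDiff f (replicaSwap A Z) = replicaDiff f Z := by
  have hA {i : ι} (hi : i ∈ (S : Set ι)) : i ∉ A := Finset.disjoint_left.1 hSA hi
  have h₁ : f (A.piecewise Z.2 Z.1) = f Z.1 := hf fun i hi => A.piecewise_eq_of_notMem _ _ (hA hi)
  have h₂ : f (A.piecewise Z.1 Z.2) = f Z.2 := hf fun i hi => A.piecewise_eq_of_notMem _ _ (hA hi)
  simp only [replicaDiff, replicaSwap, h₁, h₂]

variable [Fintype ι] [MeasurableSpace X]

lemma measurePreserving_replicaSwap (μ : ι → Measure X) [∀ i, SigmaFinite (μ i)]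
    (A : Finset ι) :
    MeasurePreserving (replicaSwap A) ((Measure.pi μ).prod (Measure.pi μ))
      ((Measure.pi μ).prod (Measure.pi μ)) := by
  have hzip := measurePreserving_arrowProdEquivProdArrow X X ι μ μ
  have hsite (i : ι) : MeasurePreserving (fun y : X × X => if i ∈ A then y.swap else y)
      ((μ i).prod (μ i)) ((μ i).prod (μ i)) := by
    split_ifs
    · exact Measure.measurePreserving_swap
    · exact MeasurePreserving.id _
  convert (hzip.comp (measurePreserving_pi _ _ hsite)).comp (hzip.symm _) using 1
  funext Z
  refine Prod.ext ?_ ?_ <;> funext i <;> by_cases hi : i ∈ A <;>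
    simp [replicaSwap, MeasurableEquiv.arrowProdEquivProdArrow, Equiv.arrowProdEquivProdArrow, hi]

lemma integral_eq_zero_of_replicaSwap_eq_neg (μ : ι → Measure X)
    [∀ i, SigmaFinite (μ i)] (A : Finset ι) {F : (ι → X) × (ι → X) → ℝ} (hF : Measurable F)
    (h : ∀ Z, F (replicaSwap A Z) = -F Z) :
    ∫ Z, F Z ∂(Measure.pi μ).prod (Measure.pi μ) = 0 := by
  have hA := measurePreserving_replicaSwap μ A
  have hswap : ∫ Z, F (replicaSwap A Z) ∂(Measure.pi μ).prod (Measure.pi μ) =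
      ∫ Z, F Z ∂(Measure.pi μ).prod (Measure.pi μ) := by
    rw [← integral_map hA.measurable.aemeasurable hF.aestronglyMeasurable, hA.map_eq]
  simp only [h, integral_neg] at hswap
  linarith

end Replica

/-! ### The weighted chain -/

lemma le_two_mul_of_le_neighbours_add {ι : Type*} [Finite ι] (σ : Equiv.Perm ι) {f : ι → ℝ≥0∞}
    (hf : ∀ j, f j ≠ ∞) {c : ℝ≥0∞} (h : ∀ j, f j ≤ 4⁻¹ * f (σ.symm j) + 4⁻¹ * f (σ j) + c) (j : ι) :
    f j ≤ 2 * c := by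
  have : Nonempty ι := ⟨j⟩
  obtain ⟨m, hm⟩ := Finite.exists_max f
  have hquarter : (4⁻¹ : ℝ≥0∞) + 4⁻¹ = 2⁻¹ := by
    rw [← two_mul, show (4 : ℝ≥0∞) = 2 * 2 by norm_num, ENNReal.mul_inv (by simp) (by simp),
      ← mul_assoc, ENNReal.mul_inv_cancel (by simp) (by simp), one_mul]
  have hmax : 2⁻¹ * f m + 2⁻¹ * f m ≤ 2⁻¹ * f m + c := by
    calc 2⁻¹ * f m + 2⁻¹ * f m = f m := by rw [← add_mul, ENNReal.inv_two_add_inv_two, one_mul]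
      _ ≤ 4⁻¹ * f m + 4⁻¹ * f m + c := (h m).trans (by gcongr <;> exact hm _)
      _ = 2⁻¹ * f m + c := by rw [← add_mul, hquarter]
  have hhalf := (ENNReal.add_le_add_iff_left (ENNReal.mul_ne_top (by simp) (hf m))).1 hmax
  calc f j ≤ f m := hm j
    _ = 2 * (2⁻¹ * f m) := by rw [← mul_assoc, ENNReal.mul_inv_cancel (by simp) (by simp), one_mul]
    _ ≤ 2 * c := by gcongr

lemma sixteen_mul_eexp_add_le (s t : ℝ) :
    16 * eexp (s + t) ≤ 4⁻¹ * eexp (4 * s) + 4⁻¹ * eexp (4 * t) + 128 := by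
  have hpow (x : ℝ) : Real.exp (4 * x) = Real.exp x ^ 4 := by
    rw [← Real.exp_nat_mul]; norm_num
  have hreal : 16 * Real.exp (s + t) ≤
      4⁻¹ * Real.exp (4 * s) + 4⁻¹ * Real.exp (4 * t) + 128 := by
    rw [Real.exp_add, hpow, hpow]
    nlinarith [sq_nonneg (Real.exp s - Real.exp t), sq_nonneg (Real.exp s ^ 2 - 16),
      sq_nonneg (Real.exp t ^ 2 - 16)]
  have hofReal := ENNReal.ofReal_le_ofReal hreal
  rw [ENNReal.ofReal_add (by positivity) (by norm_num),
    ENNReal.ofReal_add (by positivity) (by positivity), ENNReal.ofReal_mul (by norm_num),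
    ENNReal.ofReal_mul (by norm_num), ENNReal.ofReal_mul (by norm_num),
    ENNReal.ofReal_inv_of_pos (by norm_num)] at hofReal
  simpa only [eexp, ENNReal.ofReal_ofNat] using hofReal

section Chain

variable {ι : Type*} (σ : Equiv.Perm ι) (a β : ℝ)

/-- The interaction exponent of the bond `j`, which joins the sites `j` and `σ⁻¹ j`. Sites carry a
position and a momentum; only positions interact. -/
def bondExponent (j : ι) (z : ι → ℝ × ℝ) : ℝ := β * a * ((z j).1 * (z (σ.symm j)).1)

/-- The product of the quadratic weights, with rates `r`, of the two end points of the bond `j`. For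
the constant rate `a` it dominates the interaction along this bond. -/
noncomputable def bondTilt (r : ι → ℝ) (j : ι) (z : ι → ℝ × ℝ) : ℝ≥0∞ :=
  quadWeight β (r j) (z j) * quadWeight β (r (σ.symm j)) (z (σ.symm j))

@[fun_prop]
lemma measurable_bondExponent (j : ι) : Measurable (bondExponent σ a β j) := by
  unfold bondExponent; fun_prop

@[fun_prop]
lemma measurable_bondTilt (r : ι → ℝ) (j : ι) : Measurable (bondTilt σ β r j) := by
  unfold bondTilt; fun_prop

variable {a β}

lemma one_le_bondTilt (hβ : 0 ≤ β) {r : ι → ℝ} (hr : ∀ i, 0 ≤ r i) (j : ι) (z : ι → ℝ × ℝ) :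
    1 ≤ bondTilt σ β r j z :=
  one_le_mul (one_le_quadWeight hβ (hr j) _) (one_le_quadWeight hβ (hr _) _)

lemma eexp_abs_bondExponent_le (hβ : 0 ≤ β) (ha : 0 ≤ a) (j : ι) (z : ι → ℝ × ℝ) :
    eexp |bondExponent σ a β j z| ≤ bondTilt σ β (fun _ => a) j z := by
  rw [bondTilt, quadWeight, quadWeight, ← eexp_add, bondExponent, abs_mul,
    abs_of_nonneg (mul_nonneg hβ ha), abs_mul]
  refine eexp_le_eexp ?_
  rw [← sq_abs (z j).1, ← sq_abs (z (σ.symm j)).1]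
  linarith [mul_nonneg (mul_nonneg hβ ha) (sq_nonneg (|(z j).1| - |(z (σ.symm j)).1|))]

lemma prod_bondTilt_le_of_interior (hβ : 0 ≤ β) {r : ι → ℝ} (hr : ∀ i, 0 ≤ r i) {S G : Finset ι}
    (hG : ∀ j ∈ G, j ∈ S ∧ σ.symm j ∈ S) (z : ι → ℝ × ℝ) :
    ∏ j ∈ G, bondTilt σ β r j z ≤ ∏ i ∈ S, quadWeight β (2 * r i) (z i) := by
  have hsub {T : Finset ι} (hT : T ⊆ S) :
      ∏ i ∈ T, quadWeight β (r i) (z i) ≤ ∏ i ∈ S, quadWeight β (r i) (z i) :=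
    Finset.prod_le_prod_of_subset_of_one_le' hT fun i _ _ => one_le_quadWeight hβ (hr i) _
  have hprev : ∏ j ∈ G, quadWeight β (r (σ.symm j)) (z (σ.symm j)) =
      ∏ i ∈ G.map σ.symm.toEmbedding, quadWeight β (r i) (z i) := by
    rw [Finset.prod_map]; rfl
  simp only [bondTilt, two_mul, ← quadWeight_mul, Finset.prod_mul_distrib]
  rw [hprev]
  refine mul_le_mul' (hsub fun j hj => (hG j hj).1) (hsub fun i hi => ?_)
  obtain ⟨j, hj, rfl⟩ := Finset.mem_map.1 hi
  exact (hG j hj).2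

variable (a β)

/-- The interaction weight of the set of bonds `A`. -/
noncomputable def couplingWeight (A : Finset ι) (z : ι → ℝ × ℝ) : ℝ≥0∞ :=
  ∏ j ∈ A, eexp (bondExponent σ a β j z)

@[fun_prop]
lemma measurable_couplingWeight (A : Finset ι) : Measurable (couplingWeight σ a β A) := by
  unfold couplingWeight; fun_prop

/-- The factor multiplying the position of site `i` in the interaction exponent of `A`. -/
def siteField [DecidableEq ι] (A : Finset ι) (i : ι) (z : ι → ℝ × ℝ) : ℝ :=
  β * a * ((if i ∈ A then (z (σ.symm i)).1 else 0) + if σ i ∈ A then (z (σ i)).1 else 0)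

@[fun_prop]
lemma measurable_siteField [DecidableEq ι] (A : Finset ι) (i : ι) :
    Measurable (siteField σ a β A i) := by
  unfold siteField; split_ifs <;> fun_prop

variable {a β} in
lemma eexp_siteField_le [DecidableEq ι] (ha : 0 ≤ a) (ha16 : a ≤ 1 / 16) (hβ : 0 < β)
    (A : Finset ι) (i : ι) (z : ι → ℝ × ℝ) :
    16 * eexp (2 * siteField σ a β A i z ^ 2 / β) ≤
      4⁻¹ * quadWeight β (1 / 4) (z (σ.symm i)) + 4⁻¹ * quadWeight β (1 / 4) (z (σ i)) + 128 := by
  set u := (z (σ.symm i)).1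
  set v := (z (σ i)).1
  set s := if i ∈ A then u else 0 with hs
  set t := if σ i ∈ A then v else 0 with ht
  have hsu : s ^ 2 ≤ u ^ 2 := by rw [hs]; split_ifs <;> nlinarith
  have htv : t ^ 2 ≤ v ^ 2 := by rw [ht]; split_ifs <;> nlinarith
  have hfield : 2 * siteField σ a β A i z ^ 2 / β ≤ β * u ^ 2 / 32 + β * v ^ 2 / 32 := by
    calc 2 * siteField σ a β A i z ^ 2 / β = 2 * (β * a * (s + t)) ^ 2 / β := rfl
      _ = 2 * β * a ^ 2 * (s + t) ^ 2 := by field_simp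
      _ ≤ 2 * β * (1 / 16) ^ 2 * (2 * (u ^ 2 + v ^ 2)) := by
          gcongr
          linarith [add_sq_le (a := s) (b := t)]
      _ ≤ _ := by nlinarith [mul_nonneg hβ.le (sq_nonneg u), mul_nonneg hβ.le (sq_nonneg v)]
  have hquad (x : ℝ) : β * (1 / 4) * x ^ 2 / 2 = 4 * (β * x ^ 2 / 32) := by ring
  simp only [quadWeight, hquad]
  exact (mul_le_mul' le_rfl (eexp_le_eexp hfield)).trans (sixteen_mul_eexp_add_le _ _)

variable {σ} in
lemma siteField_update [DecidableEq ι] (hσ : ∀ i, σ i ≠ i) (A : Finset ι) (i : ι)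
    (z : ι → ℝ × ℝ) (y : ℝ × ℝ) :
    siteField σ a β A i (Function.update z i y) = siteField σ a β A i z := by
  have hσi : σ.symm i ≠ i := by simpa only [σ.apply_symm_apply, ne_comm] using hσ (σ.symm i)
  rw [siteField, Function.update_of_ne hσi, Function.update_of_ne (hσ i), siteField]

variable {σ} in
lemma couplingWeight_update [DecidableEq ι] (hσ : ∀ i, σ i ≠ i) (A : Finset ι) (i : ι)
    (z : ι → ℝ × ℝ) (y : ℝ × ℝ) :
    couplingWeight σ a β A (Function.update z i y) =
      couplingWeight σ a β (A \ {i, σ i}) z * eexp (siteField σ a β A i z * y.1) := by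
  have hσi : σ.symm i ≠ i := by simpa only [σ.apply_symm_apply, ne_comm] using hσ (σ.symm i)
  have hfar : ∏ j ∈ A \ {i, σ i}, eexp (bondExponent σ a β j (Function.update z i y)) =
      couplingWeight σ a β (A \ {i, σ i}) z := by
    refine Finset.prod_congr rfl fun j hj => ?_
    simp only [Finset.mem_sdiff, Finset.mem_insert, Finset.mem_singleton, not_or] at hj
    rw [bondExponent, Function.update_of_ne hj.2.1,
      Function.update_of_ne fun h => hj.2.2 (by rw [← h, Equiv.apply_symm_apply]), bondExponent]
  have hnear : ∏ j ∈ A ∩ {i, σ i}, eexp (bondExponent σ a β j (Function.update z i y)) =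
      eexp (siteField σ a β A i z * y.1) := by
    rw [← eexp_sum, Finset.inter_comm, ← Finset.filter_mem_eq_inter, Finset.sum_filter,
      Finset.sum_pair (hσ i).symm, siteField]
    simp only [bondExponent, σ.symm_apply_apply, Function.update_self, Function.update_of_ne hσi,
      Function.update_of_ne (hσ i)]
    congr 1
    split_ifs <;> ring
  rw [couplingWeight, ← Finset.prod_inter_mul_prod_sdiff A {i, σ i}, hfar, hnear, mul_comm]

variable [Fintype ι]

/-- The bonds none of whose end points lies in `S`. -/
def bondsAvoiding [DecidableEq ι] (S : Finset ι) : Finset ι := {j | j ∉ S ∧ σ.symm j ∉ S}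

/-- The sites outside `S` which follow a site of `S`; those which precede one form
`outerBoundary σ.symm S`. -/
def outerBoundary [DecidableEq ι] (S : Finset ι) : Finset ι := {j | j ∉ S ∧ σ.symm j ∈ S}

lemma prod_bondTilt_compl_bondsAvoiding [DecidableEq ι] (r : ι → ℝ) (S : Finset ι)
    (z : ι → ℝ × ℝ) :
    ∏ j ∈ (bondsAvoiding σ S)ᶜ, bondTilt σ β r j z =
      (∏ i ∈ S, quadWeight β (2 * r i) (z i)) *
        ((∏ i ∈ outerBoundary σ S, quadWeight β (r i) (z i)) *
          ∏ i ∈ outerBoundary σ.symm S, quadWeight β (r i) (z i)) := by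
  have hdisj (τ : Equiv.Perm ι) : Disjoint S (outerBoundary τ S) :=
    Finset.disjoint_left.2 fun i hi => by simp [outerBoundary, hi]
  have hnext : (bondsAvoiding σ S)ᶜ = S ∪ outerBoundary σ S := by
    ext j
    simp only [bondsAvoiding, outerBoundary, Finset.mem_compl, Finset.mem_filter, Finset.mem_univ,
      true_and, Finset.mem_union]
    tauto
  have hprev : ∏ j ∈ (bondsAvoiding σ S)ᶜ, quadWeight β (r (σ.symm j)) (z (σ.symm j)) =
      ∏ i ∈ S ∪ outerBoundary σ.symm S, quadWeight β (r i) (z i) := by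
    refine Finset.prod_equiv σ.symm (fun j => ?_) fun j _ => rfl
    simp only [bondsAvoiding, outerBoundary, Finset.mem_compl, Finset.mem_filter, Finset.mem_univ,
      true_and, Finset.mem_union, Equiv.symm_symm, Equiv.apply_symm_apply]
    tauto
  simp only [bondTilt, Finset.prod_mul_distrib, hprev]
  rw [hnext, Finset.prod_union (hdisj _), Finset.prod_union (hdisj _), mul_mul_mul_comm,
    ← Finset.prod_mul_distrib]
  simp only [quadWeight_mul, two_mul]

lemma prod_bondTilt (r : ι → ℝ) (z : ι → ℝ × ℝ) :
    ∏ j, bondTilt σ β r j z = ∏ i, quadWeight β (2 * r i) (z i) := by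
  classical
  simpa [bondsAvoiding, outerBoundary] using
    prod_bondTilt_compl_bondsAvoiding σ β r Finset.univ z

variable {a β} in
lemma couplingWeight_le_prod_quadWeight (hβ : 0 ≤ β) (ha : 0 ≤ a) (A : Finset ι) (z : ι → ℝ × ℝ) :
    couplingWeight σ a β A z ≤ ∏ i, quadWeight β (2 * a) (z i) := by
  rw [← prod_bondTilt σ β fun _ => a]
  calc couplingWeight σ a β A z ≤ ∏ j ∈ A, bondTilt σ β (fun _ => a) j z :=
        Finset.prod_le_prod' fun j _ =>
          (eexp_le_eexp (le_abs_self _)).trans (eexp_abs_bondExponent_le σ hβ ha j z)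
    _ ≤ ∏ j, bondTilt σ β (fun _ => a) j z :=
        Finset.prod_le_prod_of_subset_of_one_le' A.subset_univ fun j _ _ =>
          one_le_bondTilt σ hβ (fun _ => ha) j z

/-- The partition function of the chain with single-site measure `ν` and interacting bonds `A`. -/
noncomputable def partitionFn (ν : Measure (ℝ × ℝ)) (A : Finset ι) : ℝ≥0∞ :=
  ∫⁻ z, couplingWeight σ a β A z ∂Measure.pi fun _ => ν

/-- The unnormalized exponential moment of the position of site `j` in the chain with interacting
bonds `A`. -/
noncomputable def expMoment (ν : Measure (ℝ × ℝ)) (A : Finset ι) (j : ι) : ℝ≥0∞ :=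
  ∫⁻ z, quadWeight β (1 / 4) (z j) * couplingWeight σ a β A z ∂Measure.pi fun _ => ν

namespace HasSiteBounds

variable {σ a β} {ν : Measure (ℝ × ℝ)} {Λ : ℝ}

lemma partitionFn_sdiff_le [DecidableEq ι] (hν : HasSiteBounds ν a β Λ) (hσ : ∀ i, σ i ≠ i)
    (A : Finset ι) (i : ι) :
    partitionFn σ a β ν (A \ {i, σ i}) ≤ partitionFn σ a β ν A := by
  have := hν.isProbabilityMeasure
  refine lintegral_pi_le_of_forall_update i (by fun_prop) (by fun_prop) fun z => ?_
  have hbase (y : ℝ × ℝ) : couplingWeight σ a β (A \ {i, σ i}) (Function.update z i y) =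
      couplingWeight σ a β (A \ {i, σ i}) z := by
    rw [couplingWeight_update a β hσ]
    simp [siteField, eexp]
  simp only [hbase, couplingWeight_update a β hσ A]
  rw [lintegral_const_mul _ (by fun_prop), lintegral_const, measure_univ]
  gcongr
  exact hν.one_le_lintegral_eexp _

lemma partitionFn_bondsAvoiding_le [DecidableEq ι] (hν : HasSiteBounds ν a β Λ)
    (hσ : ∀ i, σ i ≠ i) (S : Finset ι) :
    partitionFn σ a β ν (bondsAvoiding σ S) ≤ partitionFn σ a β ν Finset.univ := by
  induction S using Finset.induction_on with
  | empty => simp [bondsAvoiding]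
  | insert i S _ ih =>
    have hinsert : bondsAvoiding σ (insert i S) = bondsAvoiding σ S \ {i, σ i} := by
      ext j
      simp only [bondsAvoiding, Finset.mem_filter, Finset.mem_univ, true_and, Finset.mem_insert,
        Finset.mem_sdiff, Finset.mem_singleton, not_or, Equiv.symm_apply_eq]
      tauto
    exact hinsert ▸ (hν.partitionFn_sdiff_le hσ _ i).trans ih

lemma one_le_partitionFn_univ (hν : HasSiteBounds ν a β Λ) (hσ : ∀ i, σ i ≠ i) :
    1 ≤ partitionFn σ a β ν Finset.univ := by
  classical
  have := hν.isProbabilityMeasure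
  simpa [partitionFn, bondsAvoiding, couplingWeight] using
    hν.partitionFn_bondsAvoiding_le hσ Finset.univ

lemma expMoment_ne_top (hν : HasSiteBounds ν a β Λ) (A : Finset ι) (j : ι) :
    expMoment σ a β ν A j ≠ ∞ := by
  have := hν.isProbabilityMeasure
  have hβ := hν.beta_pos.le
  have hone (i : ι) (z : ι → ℝ × ℝ) : 1 ≤ quadWeight β (1 / 4) (z i) :=
    one_le_quadWeight hβ (by norm_num) _
  have hdom (z : ι → ℝ × ℝ) : quadWeight β (1 / 4) (z j) * couplingWeight σ a β A z ≤
      ∏ i, quadWeight β (1 / 4 + 2 * a) (z i) := by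
    simp only [← quadWeight_mul, Finset.prod_mul_distrib]
    exact mul_le_mul' (Finset.single_le_prod' (fun i _ => hone i z) (Finset.mem_univ j))
      (couplingWeight_le_prod_quadWeight σ hβ hν.coupling_pos.le A z)
  refine ne_top_of_le_ne_top (ENNReal.mul_ne_top (ENNReal.prod_ne_top fun i _ => ?_) (by simp))
    ((lintegral_mono fun z => (hdom z).trans_eq (mul_one _).symm).trans_eq
      (lintegral_pi_prod_mul_of_dependsOn (μ := fun _ => ν) Finset.univ
        (fun _ => measurable_quadWeight) measurable_const
        ((dependsOn_const (1 : ℝ≥0∞)).mono (Set.empty_subset _))))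
  exact ne_top_of_le_ne_top (by norm_num)
    (hν.lintegral_quadWeight_le (by linarith [hν.coupling_le]))

lemma partitionFn_ne_top [Nonempty ι] (hν : HasSiteBounds ν a β Λ) (A : Finset ι) :
    partitionFn σ a β ν A ≠ ∞ := by
  obtain ⟨i⟩ := ‹Nonempty ι›
  refine ne_top_of_le_ne_top (hν.expMoment_ne_top (σ := σ) A i) (lintegral_mono fun z => ?_)
  exact le_mul_of_one_le_left' (one_le_quadWeight hν.beta_pos.le (by norm_num) (z i))

lemma expMoment_le_neighbours (hν : HasSiteBounds ν a β Λ) (hσ : ∀ i, σ i ≠ i) (A : Finset ι)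
    (j : ι) :
    expMoment σ a β ν A j ≤
      4⁻¹ * expMoment σ a β ν A (σ.symm j) + 4⁻¹ * expMoment σ a β ν A (σ j) +
        128 * partitionFn σ a β ν A := by
  classical
  have := hν.isProbabilityMeasure
  calc expMoment σ a β ν A j
      ≤ ∫⁻ z, 16 * eexp (2 * siteField σ a β A j z ^ 2 / β) * couplingWeight σ a β A z
          ∂Measure.pi fun _ => ν := by
        refine lintegral_pi_le_of_forall_update j (by fun_prop) (by fun_prop) fun z => ?_
        simp only [couplingWeight_update a β hσ A, Function.update_self, siteField_update a β hσ,
          mul_left_comm _ (couplingWeight σ a β (A \ {j, σ j}) z)]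
        rw [lintegral_const_mul _ (by fun_prop), lintegral_const_mul _ (by fun_prop),
          lintegral_const_mul _ (by fun_prop)]
        gcongr
        exact (hν.lintegral_quadWeight_mul_eexp_le _).trans
          (le_mul_of_one_le_right' (hν.one_le_lintegral_eexp _))
    _ ≤ ∫⁻ z, (4⁻¹ * quadWeight β (1 / 4) (z (σ.symm j)) + 4⁻¹ * quadWeight β (1 / 4) (z (σ j)) +
          128) * couplingWeight σ a β A z ∂Measure.pi fun _ => ν := by
        gcongr with z
        exact eexp_siteField_le σ hν.coupling_pos.le hν.coupling_le hν.beta_pos A j z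
    _ = _ := by
        simp only [add_mul, mul_assoc]
        rw [lintegral_add_left (by fun_prop), lintegral_add_left (by fun_prop),
          lintegral_const_mul _ (by fun_prop), lintegral_const_mul _ (by fun_prop),
          lintegral_const_mul _ (by fun_prop), expMoment, expMoment, partitionFn]

lemma expMoment_le (hν : HasSiteBounds ν a β Λ) (hσ : ∀ i, σ i ≠ i) (A : Finset ι) (j : ι) :
    expMoment σ a β ν A j ≤ 256 * partitionFn σ a β ν A := by
  refine (le_two_mul_of_le_neighbours_add σ (hν.expMoment_ne_top A)
    (hν.expMoment_le_neighbours hσ A) j).trans_eq ?_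
  rw [← mul_assoc]
  norm_num

end HasSiteBounds

end Chain

/-! ### The cluster expansion -/

section Cluster

variable {κ R : Type*} [CommRing R]

/-- The term of the expansion of `∏ j, (1 + (w j - 1))` in which the factors indexed by `T` have
been replaced by `w j - 1`, while those indexed by `E` have not been expanded. -/
def clusterWeight (w : κ → R) (T E : Finset κ) : R := (∏ j ∈ T, (w j - 1)) * ∏ j ∈ E, w j

variable [DecidableEq κ]

lemma prod_eq_sum_ssubsets_prod_sub_one_add (w : κ → R) (G : Finset κ) :
    ∏ j ∈ G, w j = ∑ T ∈ G.ssubsets, ∏ j ∈ T, (w j - 1) + ∏ j ∈ G, (w j - 1) := by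
  rw [Finset.ssubsets, Finset.sum_erase_add _ _ (Finset.mem_powerset_self G),
    ← Finset.prod_add_one]
  simp only [sub_add_cancel]

lemma prod_eq_clusterWeight [Fintype κ] (w : κ → R) {G₁ G₂ : Finset κ} (h : Disjoint G₁ G₂) :
    ∏ j, w j = clusterWeight w G₁ G₁ᶜ + clusterWeight w G₂ G₂ᶜ -
        clusterWeight w (G₁ ∪ G₂) (G₁ ∪ G₂)ᶜ +
      ∑ T₁ ∈ G₁.ssubsets, ∑ T₂ ∈ G₂.ssubsets, clusterWeight w (T₁ ∪ T₂) (G₁ ∪ G₂)ᶜ := by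
  have hsplit {A C : Finset κ} (hAC : Disjoint A C) :
      ∏ j ∈ Aᶜ, w j = (∏ j ∈ C, w j) * ∏ j ∈ (A ∪ C)ᶜ, w j := by
    rw [Finset.compl_union, ← Finset.prod_inter_mul_prod_sdiff Aᶜ C, Finset.sdiff_eq_inter_compl,
      Finset.inter_eq_right.2 (Finset.subset_compl_iff_disjoint_left.2 hAC)]
  have hcluster {T₁ T₂ : Finset κ} (h₁ : T₁ ⊆ G₁) (h₂ : T₂ ⊆ G₂) :
      clusterWeight w (T₁ ∪ T₂) (G₁ ∪ G₂)ᶜ =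
        (∏ j ∈ T₁, (w j - 1)) * (∏ j ∈ T₂, (w j - 1)) * ∏ j ∈ (G₁ ∪ G₂)ᶜ, w j := by
    rw [clusterWeight, Finset.prod_union (Finset.disjoint_of_subset_left h₁
      (Finset.disjoint_of_subset_right h₂ h))]
  have hsum : ∑ T₁ ∈ G₁.ssubsets, ∑ T₂ ∈ G₂.ssubsets, clusterWeight w (T₁ ∪ T₂) (G₁ ∪ G₂)ᶜ =
      (∑ T ∈ G₁.ssubsets, ∏ j ∈ T, (w j - 1)) * (∑ T ∈ G₂.ssubsets, ∏ j ∈ T, (w j - 1)) *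
        ∏ j ∈ (G₁ ∪ G₂)ᶜ, w j := by
    rw [Finset.sum_mul_sum, Finset.sum_mul]
    refine Finset.sum_congr rfl fun T₁ h₁ => ?_
    rw [Finset.sum_mul]
    exact Finset.sum_congr rfl fun T₂ h₂ =>
      hcluster (Finset.mem_ssubsets.1 h₁).subset (Finset.mem_ssubsets.1 h₂).subset
  rw [hsum, hcluster subset_rfl subset_rfl, clusterWeight, clusterWeight, hsplit h,
    hsplit h.symm, Finset.union_comm G₂ G₁, ← Finset.prod_mul_prod_compl (G₁ ∪ G₂) w,
    Finset.prod_union h, prod_eq_sum_ssubsets_prod_sub_one_add w G₁,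
    prod_eq_sum_ssubsets_prod_sub_one_add w G₂]
  ring

end Cluster

/-! ### Domination of the cluster weights -/

section Domination

lemma enorm_prod {κ 𝕜 : Type*} [NormedField 𝕜] (s : Finset κ) (f : κ → 𝕜) :
    ‖∏ j ∈ s, f j‖ₑ = ∏ j ∈ s, ‖f j‖ₑ := by
  simp only [enorm_eq_nnnorm, nnnorm_prod, ENNReal.ofNNReal_finsetProd]

lemma quadWeight_mul_quadWeight_le (β r : ℝ) (y y' : ℝ × ℝ) :
    quadWeight β r y * quadWeight β r y' ≤
      2⁻¹ * (quadWeight β (2 * r) y + quadWeight β (2 * r) y') := by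
  have hamgm (s t : ℝ) : Real.exp s * Real.exp t ≤ 2⁻¹ * (Real.exp s ^ 2 + Real.exp t ^ 2) := by
    linarith [two_mul_le_add_sq (Real.exp s) (Real.exp t)]
  have hofReal := ENNReal.ofReal_le_ofReal (hamgm (β * r * y.1 ^ 2 / 2) (β * r * y'.1 ^ 2 / 2))
  rw [ENNReal.ofReal_mul (by positivity), ENNReal.ofReal_mul (by norm_num),
    ENNReal.ofReal_add (by positivity) (by positivity), ENNReal.ofReal_pow (by positivity),
    ENNReal.ofReal_pow (by positivity), ENNReal.ofReal_inv_of_pos (by norm_num),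
    ENNReal.ofReal_ofNat] at hofReal
  simp only [two_mul r, ← quadWeight_mul, ← sq]
  exact hofReal

lemma exists_prod_quadWeight_le {ι : Type*} [Nonempty ι] {β r s : ℝ} (hβ : 0 ≤ β) (hs : 0 ≤ s)
    (hrs : r ≤ s) {D : Finset ι} (hD : D.card ≤ 1) :
    ∃ j, ∀ z : ι → ℝ × ℝ, ∏ i ∈ D, quadWeight β r (z i) ≤ quadWeight β s (z j) := by
  obtain ⟨j, hj⟩ := Finset.card_le_one_iff_subset_singleton.1 hD
  refine ⟨j, fun z => ?_⟩
  rcases Finset.subset_singleton_iff.1 hj with rfl | rfl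
  · simpa only [Finset.prod_empty] using one_le_quadWeight hβ hs (z j)
  · simpa only [Finset.prod_singleton] using quadWeight_le_quadWeight hβ hrs (z j)

variable {ι : Type*} (σ : Equiv.Perm ι) (a β : ℝ)

/-- The interaction weight of the bond `j` in two replicas of the chain. -/
noncomputable def replicaBond (j : ι) (Z : (ι → ℝ × ℝ) × (ι → ℝ × ℝ)) : ℝ :=
  Real.exp (bondExponent σ a β j Z.1 + bondExponent σ a β j Z.2)

@[fun_prop]
lemma measurable_replicaBond (j : ι) : Measurable (replicaBond σ a β j) := by
  unfold replicaBond; fun_prop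

/-- The constant by which a bond replaced by its deviation from `1` is suppressed, when it may spend
the additional Gaussian weight of rate `r` at its end points. -/
noncomputable def bondCost (r : ι → ℝ) (j : ι) : ℝ≥0∞ :=
  ENNReal.ofReal (a / (√(r j) * √(r (σ.symm j))))

variable {a β}

lemma eexp_abs_replicaBondExponent_le (hβ : 0 ≤ β) (ha : 0 ≤ a) (j : ι)
    (Z : (ι → ℝ × ℝ) × (ι → ℝ × ℝ)) :
    eexp |bondExponent σ a β j Z.1 + bondExponent σ a β j Z.2| ≤
      bondTilt σ β (fun _ => a) j Z.1 * bondTilt σ β (fun _ => a) j Z.2 := by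
  refine (eexp_le_eexp (abs_add_le _ _)).trans ?_
  rw [eexp_add]
  exact mul_le_mul' (eexp_abs_bondExponent_le σ hβ ha j _) (eexp_abs_bondExponent_le σ hβ ha j _)

lemma enorm_replicaBond_le (hβ : 0 ≤ β) (ha : 0 ≤ a) (j : ι) (Z : (ι → ℝ × ℝ) × (ι → ℝ × ℝ)) :
    ‖replicaBond σ a β j Z‖ₑ ≤
      bondTilt σ β (fun _ => a) j Z.1 * bondTilt σ β (fun _ => a) j Z.2 := by
  rw [replicaBond, enorm_exp]
  exact (eexp_le_eexp (le_abs_self _)).trans (eexp_abs_replicaBondExponent_le σ hβ ha j Z)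

lemma enorm_replicaBond_sub_one_le (hβ : 0 ≤ β) (ha : 0 ≤ a) (j : ι)
    (Z : (ι → ℝ × ℝ) × (ι → ℝ × ℝ)) :
    ‖replicaBond σ a β j Z - 1‖ₑ ≤
      bondTilt σ β (fun _ => a) j Z.1 * bondTilt σ β (fun _ => a) j Z.2 :=
  (enorm_exp_sub_one_le_eexp_abs _).trans (eexp_abs_replicaBondExponent_le σ hβ ha j Z)

lemma ofReal_sqrt_mul_abs_add_abs_le_quadWeight_mul {r : ℝ} (hβ : 0 ≤ β) (hr : 0 ≤ r)
    (y y' : ℝ × ℝ) :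
    ENNReal.ofReal (√(β * r) * (|y.1| + |y'.1|)) ≤ quadWeight β r y * quadWeight β r y' := by
  have hsq (x : ℝ) : β * r * x ^ 2 = (√(β * r) * |x|) ^ 2 := by
    rw [mul_pow, Real.sq_sqrt (by positivity), sq_abs]
  rw [quadWeight, quadWeight, ← eexp_add, hsq, hsq]
  set v := √(β * r) * |y.1|
  set w := √(β * r) * |y'.1|
  have hexp := Real.add_one_le_exp (v ^ 2 / 2 + w ^ 2 / 2)
  refine ENNReal.ofReal_le_ofReal ?_
  linarith [sq_nonneg (v - 1), sq_nonneg (w - 1), mul_add √(β * r) |y.1| |y'.1|]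

lemma enorm_replicaBond_sub_one_le_bondCost_mul (hβ : 0 ≤ β) (ha : 0 ≤ a) {r : ι → ℝ}
    (hr : ∀ i, 0 < r i) (j : ι) (Z : (ι → ℝ × ℝ) × (ι → ℝ × ℝ)) :
    ‖replicaBond σ a β j Z - 1‖ₑ ≤
      bondCost σ a r j * (bondTilt σ β r j Z.1 * bondTilt σ β r j Z.2) *
        (bondTilt σ β (fun _ => a) j Z.1 * bondTilt σ β (fun _ => a) j Z.2) := by
  set k := σ.symm j with hk
  have hexponent : |bondExponent σ a β j Z.1 + bondExponent σ a β j Z.2| ≤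
      a / (√(r j) * √(r k)) * ((√(β * r j) * (|(Z.1 j).1| + |(Z.2 j).1|)) *
        (√(β * r k) * (|(Z.1 k).1| + |(Z.2 k).1|))) := by
    have hrj := Real.sqrt_pos.2 (hr j)
    have hrk := Real.sqrt_pos.2 (hr k)
    calc |bondExponent σ a β j Z.1 + bondExponent σ a β j Z.2|
        ≤ |bondExponent σ a β j Z.1| + |bondExponent σ a β j Z.2| := abs_add_le _ _
      _ = β * a * (|(Z.1 j).1| * |(Z.1 k).1| + |(Z.2 j).1| * |(Z.2 k).1|) := by
          simp only [bondExponent, abs_mul, abs_of_nonneg hβ, abs_of_nonneg ha, mul_add, ← hk]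
      _ ≤ β * a * ((|(Z.1 j).1| + |(Z.2 j).1|) * (|(Z.1 k).1| + |(Z.2 k).1|)) := by
          gcongr
          linarith [mul_nonneg (abs_nonneg (Z.1 j).1) (abs_nonneg (Z.2 k).1),
            mul_nonneg (abs_nonneg (Z.2 j).1) (abs_nonneg (Z.1 k).1)]
      _ = _ := by
          rw [Real.sqrt_mul hβ, Real.sqrt_mul hβ]
          field_simp
          rw [Real.sq_sqrt hβ]
          ring
  calc ‖replicaBond σ a β j Z - 1‖ₑ
      ≤ ENNReal.ofReal |bondExponent σ a β j Z.1 + bondExponent σ a β j Z.2| *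
          eexp |bondExponent σ a β j Z.1 + bondExponent σ a β j Z.2| := by
        rw [eexp, ← ENNReal.ofReal_mul (abs_nonneg _)]
        exact enorm_exp_sub_one_le _
    _ ≤ bondCost σ a r j * ((quadWeight β (r j) (Z.1 j) * quadWeight β (r j) (Z.2 j)) *
          (quadWeight β (r k) (Z.1 k) * quadWeight β (r k) (Z.2 k))) *
        (bondTilt σ β (fun _ => a) j Z.1 * bondTilt σ β (fun _ => a) j Z.2) := by
        refine mul_le_mul' ((ENNReal.ofReal_le_ofReal hexponent).trans ?_)
          (eexp_abs_replicaBondExponent_le σ hβ ha j Z)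
        rw [ENNReal.ofReal_mul (by positivity), ENNReal.ofReal_mul (by positivity)]
        gcongr
        · exact le_rfl
        · exact ofReal_sqrt_mul_abs_add_abs_le_quadWeight_mul hβ (hr j).le _ _
        · exact ofReal_sqrt_mul_abs_add_abs_le_quadWeight_mul hβ (hr k).le _ _
    _ = _ := by simp only [bondTilt, ← hk]; ring

variable (a β) [DecidableEq ι] [Fintype ι]

/-- The factor living outside `S` of the weights dominating a chain cut at the boundary of `S`. -/
noncomputable def exteriorWeight (S : Finset ι) (z : ι → ℝ × ℝ) : ℝ≥0∞ :=
  (∏ i ∈ outerBoundary σ S, quadWeight β a (z i)) *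
    (∏ i ∈ outerBoundary σ.symm S, quadWeight β a (z i)) *
      couplingWeight σ a β (bondsAvoiding σ S) z

/-- The weight dominating one replica of a cluster weight whose expanded bonds join sites of `S`. It
is a product over `S`, up to a factor living outside `S`. -/
noncomputable def arcWeight (S : Finset ι) (r : ι → ℝ) (z : ι → ℝ × ℝ) : ℝ≥0∞ :=
  (∏ i ∈ S, quadWeight β (2 * r i + 2 * a) (z i)) * exteriorWeight σ a β S z

@[fun_prop]
lemma measurable_exteriorWeight (S : Finset ι) : Measurable (exteriorWeight σ a β S) := by
  unfold exteriorWeight; fun_prop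

@[fun_prop]
lemma measurable_arcWeight (S : Finset ι) (r : ι → ℝ) : Measurable (arcWeight σ a β S r) := by
  unfold arcWeight; fun_prop

lemma dependsOn_exteriorWeight (S : Finset ι) :
    DependsOn (exteriorWeight σ a β S) (S : Set ι)ᶜ := by
  intro z z' h
  have hboundary (τ : Equiv.Perm ι) : ∏ i ∈ outerBoundary τ S, quadWeight β a (z i) =
      ∏ i ∈ outerBoundary τ S, quadWeight β a (z' i) :=
    Finset.prod_congr rfl fun i hi => by rw [h i (Finset.mem_filter.1 hi).2.1]
  have hbulk : couplingWeight σ a β (bondsAvoiding σ S) z =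
      couplingWeight σ a β (bondsAvoiding σ S) z' :=
    Finset.prod_congr rfl fun j hj => by
      rw [bondExponent, h j (Finset.mem_filter.1 hj).2.1, h _ (Finset.mem_filter.1 hj).2.2,
        bondExponent]
  rw [exteriorWeight, exteriorWeight, hboundary, hboundary, hbulk]

variable {a β}

lemma enorm_clusterWeight_replicaBond_le (hβ : 0 ≤ β) (ha : 0 ≤ a) {r : ι → ℝ}
    (hr : ∀ i, 0 < r i) {S G : Finset ι} (hG : ∀ j ∈ G, j ∈ S ∧ σ.symm j ∈ S)
    (Z : (ι → ℝ × ℝ) × (ι → ℝ × ℝ)) :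
    ‖clusterWeight (fun j => replicaBond σ a β j Z) G Gᶜ‖ₑ ≤
      (∏ j ∈ G, bondCost σ a r j) * (arcWeight σ a β S r Z.1 * arcWeight σ a β S r Z.2) := by
  set V := bondsAvoiding σ S with hV
  set q : ι → ℝ≥0∞ :=
    fun j => bondTilt σ β (fun _ => a) j Z.1 * bondTilt σ β (fun _ => a) j Z.2 with hq
  have hVG : Vᶜ \ G = Gᶜ \ V := by ext j; simp only [Finset.mem_sdiff, Finset.mem_compl]; tauto
  have hGV : G ⊆ Vᶜ := fun j hj => by simp [hV, bondsAvoiding, (hG j hj).1]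
  have hVG' : V ⊆ Gᶜ := Finset.subset_compl_comm.1 hGV
  have hexpanded : ∏ j ∈ G, ‖replicaBond σ a β j Z - 1‖ₑ ≤
      (∏ j ∈ G, bondCost σ a r j) * ((∏ i ∈ S, quadWeight β (2 * r i) (Z.1 i)) *
        ∏ i ∈ S, quadWeight β (2 * r i) (Z.2 i)) * ∏ j ∈ G, q j := by
    refine (Finset.prod_le_prod' fun j _ =>
      enorm_replicaBond_sub_one_le_bondCost_mul σ hβ ha hr j Z).trans ?_
    simp only [Finset.prod_mul_distrib, hq]
    gcongr <;> exact prod_bondTilt_le_of_interior σ hβ (fun i => (hr i).le) hG _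
  have hintact : ∏ j ∈ Gᶜ, ‖replicaBond σ a β j Z‖ₑ ≤
      (∏ j ∈ Vᶜ \ G, q j) * (couplingWeight σ a β V Z.1 * couplingWeight σ a β V Z.2) := by
    rw [← Finset.prod_sdiff hVG', hVG]
    refine mul_le_mul' (Finset.prod_le_prod' fun j _ => enorm_replicaBond_le σ hβ ha j Z) ?_
    simp only [couplingWeight, ← Finset.prod_mul_distrib, replicaBond, enorm_exp, eexp_add, le_refl]
  rw [clusterWeight, enorm_mul, enorm_prod, enorm_prod]
  refine (mul_le_mul' hexpanded hintact).trans_eq ?_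
  have hq_prod : (∏ j ∈ G, q j) * ∏ j ∈ Vᶜ \ G, q j =
      (∏ j ∈ Vᶜ, bondTilt σ β (fun _ => a) j Z.1) * ∏ j ∈ Vᶜ, bondTilt σ β (fun _ => a) j Z.2 := by
    rw [mul_comm, Finset.prod_sdiff hGV, hq, Finset.prod_mul_distrib]
  simp only [arcWeight, exteriorWeight, ← quadWeight_mul, Finset.prod_mul_distrib, ← hV]
  rw [mul_assoc, ← mul_assoc (∏ j ∈ G, q j), hq_prod, prod_bondTilt_compl_bondsAvoiding,
    prod_bondTilt_compl_bondsAvoiding]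
  simp only [two_mul a, ← quadWeight_mul, Finset.prod_mul_distrib]
  ring

lemma arcWeight_univ_zero (z : ι → ℝ × ℝ) :
    arcWeight σ a β Finset.univ 0 z = ∏ i, quadWeight β (2 * a) (z i) := by
  simp [arcWeight, exteriorWeight, couplingWeight, outerBoundary, bondsAvoiding]

lemma enorm_clusterWeight_replicaBond_le_arcWeight_univ (hβ : 0 ≤ β) (ha : 0 ≤ a) {T E : Finset ι}
    (hTE : Disjoint T E) (Z : (ι → ℝ × ℝ) × (ι → ℝ × ℝ)) :
    ‖clusterWeight (fun j => replicaBond σ a β j Z) T E‖ₑ ≤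
      arcWeight σ a β Finset.univ 0 Z.1 * arcWeight σ a β Finset.univ 0 Z.2 := by
  rw [arcWeight_univ_zero, arcWeight_univ_zero, ← prod_bondTilt σ β fun _ => a,
    ← prod_bondTilt σ β fun _ => a, ← Finset.prod_mul_distrib, clusterWeight, enorm_mul,
    enorm_prod, enorm_prod]
  calc (∏ j ∈ T, ‖replicaBond σ a β j Z - 1‖ₑ) * ∏ j ∈ E, ‖replicaBond σ a β j Z‖ₑ
      ≤ (∏ j ∈ T, bondTilt σ β (fun _ => a) j Z.1 * bondTilt σ β (fun _ => a) j Z.2) *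
          ∏ j ∈ E, bondTilt σ β (fun _ => a) j Z.1 * bondTilt σ β (fun _ => a) j Z.2 :=
        mul_le_mul'
          (Finset.prod_le_prod' fun j _ => enorm_replicaBond_sub_one_le σ hβ ha j Z)
          (Finset.prod_le_prod' fun j _ => enorm_replicaBond_le σ hβ ha j Z)
    _ ≤ _ := by
        rw [← Finset.prod_union hTE]
        exact Finset.prod_le_prod_of_subset_of_one_le' (Finset.subset_univ _) fun j _ _ =>
          one_le_mul (one_le_bondTilt σ hβ (fun _ => ha) j _)
            (one_le_bondTilt σ hβ (fun _ => ha) j _)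

variable {σ} in
lemma HasSiteBounds.lintegral_exteriorWeight_le {ν : Measure (ℝ × ℝ)} {Λ : ℝ} [Nonempty ι]
    (hν : HasSiteBounds ν a β Λ) (hσ : ∀ i, σ i ≠ i) {S : Finset ι}
    (hnext : (outerBoundary σ S).card ≤ 1) (hprev : (outerBoundary σ.symm S).card ≤ 1) :
    ∫⁻ z, exteriorWeight σ a β S z ∂(Measure.pi fun _ => ν) ≤
      256 * partitionFn σ a β ν Finset.univ := by
  have ha8 : a ≤ 1 / 8 := by linarith [hν.coupling_le]
  obtain ⟨i, hi⟩ := exists_prod_quadWeight_le hν.beta_pos.le (by norm_num) ha8 hnext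
  obtain ⟨j, hj⟩ := exists_prod_quadWeight_le hν.beta_pos.le (by norm_num) ha8 hprev
  set V := bondsAvoiding σ S
  calc ∫⁻ z, exteriorWeight σ a β S z ∂(Measure.pi fun _ => ν)
      ≤ ∫⁻ z, 2⁻¹ * (quadWeight β (1 / 4) (z i) + quadWeight β (1 / 4) (z j)) *
          couplingWeight σ a β V z ∂(Measure.pi fun _ => ν) := by
        refine lintegral_mono fun z => mul_le_mul' ((mul_le_mul' (hi z) (hj z)).trans ?_) le_rfl
        exact (quadWeight_mul_quadWeight_le β (1 / 8) (z i) (z j)).trans_eq (by norm_num)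
    _ = 2⁻¹ * (expMoment σ a β ν V i + expMoment σ a β ν V j) := by
        simp only [mul_assoc, add_mul]
        rw [lintegral_const_mul _ (by fun_prop), lintegral_add_left (by fun_prop), expMoment,
          expMoment]
    _ ≤ 2⁻¹ * (256 * partitionFn σ a β ν V + 256 * partitionFn σ a β ν V) := by
        gcongr <;> exact hν.expMoment_le hσ _ _
    _ = 256 * partitionFn σ a β ν V := by
        rw [← two_mul, ← mul_assoc, ENNReal.inv_mul_cancel (by simp) (by simp), one_mul]
    _ ≤ 256 * partitionFn σ a β ν Finset.univ := by
        gcongr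
        exact hν.partitionFn_bondsAvoiding_le hσ S

end Domination

/-! ### Monomials in the site variables -/

section Monomials

variable {ι : Type*}

/-- The total degree of the monomial with exponents `e` in the two variables of site `i`. -/
def siteDegree (e : ι ⊕ ι →₀ ℕ) (i : ι) : ℕ := e (Sum.inl i) + e (Sum.inr i)

lemma siteDegree_add (e e' : ι ⊕ ι →₀ ℕ) (i : ι) :
    siteDegree (e + e') i = siteDegree e i + siteDegree e' i :=
  add_add_add_comm _ _ _ _

variable [Fintype ι]

/-- The monomial with exponents `e`, as an observable of the chain; `Sum.inl i` indexes the position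
and `Sum.inr i` the momentum of site `i`. -/
noncomputable def siteMonomial (e : ι ⊕ ι →₀ ℕ) (z : ι → ℝ × ℝ) : ℝ :=
  ∏ i, (z i).1 ^ e (Sum.inl i) * (z i).2 ^ e (Sum.inr i)

/-- The Gaussian-type bound on the absolute moment with exponents `e` of independent coordinates of
scale `Λ`. -/
noncomputable def momentBound (Λ : ℝ) (e : ι ⊕ ι →₀ ℕ) : ℝ :=
  ∏ i, Real.Gamma ((siteDegree e i : ℝ) / 2 + 1) * Λ ^ siteDegree e i

@[fun_prop]
lemma measurable_siteMonomial (e : ι ⊕ ι →₀ ℕ) : Measurable (siteMonomial e) := by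
  unfold siteMonomial; fun_prop

lemma siteMonomial_zero (z : ι → ℝ × ℝ) : siteMonomial 0 z = 1 := by simp [siteMonomial]

lemma siteMonomial_add (e e' : ι ⊕ ι →₀ ℕ) (z : ι → ℝ × ℝ) :
    siteMonomial (e + e') z = siteMonomial e z * siteMonomial e' z := by
  simp only [siteMonomial, Finsupp.add_apply, pow_add, ← Finset.prod_mul_distrib]
  exact Finset.prod_congr rfl fun i _ => by ring

lemma siteMonomial_eq_prod {e : ι ⊕ ι →₀ ℕ} {S : Finset ι} (he : ∀ i ∉ S, siteDegree e i = 0)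
    (z : ι → ℝ × ℝ) :
    siteMonomial e z = ∏ i ∈ S, (z i).1 ^ e (Sum.inl i) * (z i).2 ^ e (Sum.inr i) := by
  refine (Finset.prod_subset S.subset_univ fun i _ hi => ?_).symm
  obtain ⟨hx, hy⟩ := Nat.add_eq_zero_iff.1 (he i hi)
  simp [hx, hy]

lemma enorm_replicaDiff_siteMonomial_mul_le (e e' : ι ⊕ ι →₀ ℕ) (Z : (ι → ℝ × ℝ) × (ι → ℝ × ℝ)) :
    ‖replicaDiff (siteMonomial e) Z * replicaDiff (siteMonomial e') Z‖ₑ ≤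
      ‖siteMonomial (e + e') Z.1 * siteMonomial 0 Z.2‖ₑ +
        ‖siteMonomial 0 Z.1 * siteMonomial (e + e') Z.2‖ₑ +
        ‖siteMonomial e Z.1 * siteMonomial e' Z.2‖ₑ +
        ‖siteMonomial e' Z.1 * siteMonomial e Z.2‖ₑ := by
  simp only [replicaDiff, siteMonomial_add, siteMonomial_zero, mul_one, one_mul, enorm_mul]
  refine (mul_le_mul' enorm_sub_le enorm_sub_le).trans_eq ?_
  ring

lemma dependsOn_siteMonomial {e : ι ⊕ ι →₀ ℕ} {S : Finset ι} (he : ∀ i ∉ S, siteDegree e i = 0) :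
    DependsOn (siteMonomial e) (S : Set ι) := by
  intro z z' h
  rw [siteMonomial_eq_prod he, siteMonomial_eq_prod he]
  exact Finset.prod_congr rfl fun i hi => by rw [h i hi]

lemma momentBound_zero (Λ : ℝ) : momentBound Λ (0 : ι ⊕ ι →₀ ℕ) = 1 := by
  simp [momentBound, siteDegree]

lemma momentBound_nonneg {Λ : ℝ} (hΛ : 0 ≤ Λ) (e : ι ⊕ ι →₀ ℕ) : 0 ≤ momentBound Λ e :=
  Finset.prod_nonneg fun _ _ =>
    mul_nonneg (Real.Gamma_nonneg_of_nonneg (by positivity)) (by positivity)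

lemma momentBound_add (Λ : ℝ) {e e' : ι ⊕ ι →₀ ℕ}
    (h : ∀ i, siteDegree e i = 0 ∨ siteDegree e' i = 0) :
    momentBound Λ (e + e') = momentBound Λ e * momentBound Λ e' := by
  simp only [momentBound, ← Finset.prod_mul_distrib]
  refine Finset.prod_congr rfl fun i _ => ?_
  rcases h i with hi | hi <;> simp [siteDegree_add, hi]

lemma momentBound_eq_prod (Λ : ℝ) {e : ι ⊕ ι →₀ ℕ} {S : Finset ι}
    (he : ∀ i ∉ S, siteDegree e i = 0) :
    momentBound Λ e =
      ∏ i ∈ S, Real.Gamma ((siteDegree e i : ℝ) / 2 + 1) * Λ ^ siteDegree e i :=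
  (Finset.prod_subset S.subset_univ fun i _ hi => by simp [he i hi]).symm

end Monomials

/-! ### Moments of monomials against the dominating weights -/

namespace HasSiteBounds

variable {ι : Type*} [Fintype ι] [Nonempty ι] {σ : Equiv.Perm ι} {ν : Measure (ℝ × ℝ)}
  {a β Λ : ℝ} {S : Finset ι} {r : ι → ℝ} {e e' : ι ⊕ ι →₀ ℕ}

lemma lintegral_site_moment_le (hν : HasSiteBounds ν a β Λ) {k l : ℕ} {s : ℝ} (hs : s ≤ 1 / 16)
    (hsa : k + l ≠ 0 → s ≤ a) :
    ∫⁻ y, ‖y.1‖ₑ ^ k * ‖y.2‖ₑ ^ l * quadWeight β (2 * s + 2 * a) y ∂ν ≤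
      ENNReal.ofReal (256 * (Real.Gamma (((k + l : ℕ) : ℝ) / 2 + 1) * Λ ^ (k + l))) := by
  by_cases hkl : k + l = 0
  · obtain ⟨rfl, rfl⟩ := Nat.add_eq_zero_iff.1 hkl
    have h16 := hν.lintegral_quadWeight_le (r := 2 * s + 2 * a) (by linarith [hν.coupling_le])
    simpa using h16.trans (by norm_num : (16 : ℝ≥0∞) ≤ 256)
  · refine (lintegral_mono fun y => ?_).trans (hν.lintegral_moment_le k l)
    gcongr
    exact quadWeight_le_quadWeight hν.beta_pos.le (by linarith [hsa hkl]) y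

lemma lintegral_siteMonomial_mul_arcWeight_le [DecidableEq ι] (hν : HasSiteBounds ν a β Λ)
    (hσ : ∀ i, σ i ≠ i)
    (hnext : (outerBoundary σ S).card ≤ 1) (hprev : (outerBoundary σ.symm S).card ≤ 1)
    (hr : ∀ i, r i ≤ 1 / 16) (he : ∀ i, siteDegree e i ≠ 0 → i ∈ S ∧ r i ≤ a) :
    ∫⁻ z, ‖siteMonomial e z‖ₑ * arcWeight σ a β S r z ∂(Measure.pi fun _ => ν) ≤
      ENNReal.ofReal (256 ^ (S.card + 1) * momentBound Λ e) * partitionFn σ a β ν Finset.univ := by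
  have := hν.isProbabilityMeasure
  have hS : ∀ i ∉ S, siteDegree e i = 0 := fun i hi => by_contra fun h => hi (he i h).1
  set g : ι → ℝ × ℝ → ℝ≥0∞ := fun i y =>
    ‖y.1‖ₑ ^ e (Sum.inl i) * ‖y.2‖ₑ ^ e (Sum.inr i) * quadWeight β (2 * r i + 2 * a) y with hg
  have hsplit (z : ι → ℝ × ℝ) : ‖siteMonomial e z‖ₑ * arcWeight σ a β S r z =
      (∏ i ∈ S, g i (z i)) * exteriorWeight σ a β S z := by
    simp only [siteMonomial_eq_prod hS, enorm_prod, enorm_mul, enorm_pow, arcWeight, hg,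
      Finset.prod_mul_distrib, mul_assoc]
  have hsite : ∏ i ∈ S, ∫⁻ y, g i y ∂ν ≤ ENNReal.ofReal (256 ^ S.card * momentBound Λ e) := by
    refine (Finset.prod_le_prod' fun i _ =>
      hν.lintegral_site_moment_le (hr i) fun h => (he i h).2).trans_eq ?_
    rw [← ENNReal.ofReal_prod_of_nonneg fun i _ => mul_nonneg (by norm_num) (mul_nonneg
      (Real.Gamma_nonneg_of_nonneg (by positivity)) (pow_nonneg hν.scale_nonneg _)),
      Finset.prod_mul_distrib, Finset.prod_const, momentBound_eq_prod Λ hS]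
    rfl
  calc ∫⁻ z, ‖siteMonomial e z‖ₑ * arcWeight σ a β S r z ∂(Measure.pi fun _ => ν)
      = (∏ i ∈ S, ∫⁻ y, g i y ∂ν) * ∫⁻ z, exteriorWeight σ a β S z ∂(Measure.pi fun _ => ν) := by
        simp only [hsplit]
        exact lintegral_pi_prod_mul_of_dependsOn S (fun i => by fun_prop) (by fun_prop)
          (dependsOn_exteriorWeight σ a β S)
    _ ≤ ENNReal.ofReal (256 ^ S.card * momentBound Λ e) *
          (256 * partitionFn σ a β ν Finset.univ) :=
        mul_le_mul' hsite (hν.lintegral_exteriorWeight_le hσ hnext hprev)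
    _ = _ := by
        rw [← mul_assoc, ← ENNReal.ofReal_ofNat 256, ← ENNReal.ofReal_mul' (by norm_num)]
        congr 2
        ring

lemma lintegral_siteMonomial_mul_siteMonomial_mul_arcWeight_le [DecidableEq ι]
    (hν : HasSiteBounds ν a β Λ) (hσ : ∀ i, σ i ≠ i)
    (hnext : (outerBoundary σ S).card ≤ 1) (hprev : (outerBoundary σ.symm S).card ≤ 1)
    (hr : ∀ i, r i ≤ 1 / 16) (he : ∀ i, siteDegree e i ≠ 0 → i ∈ S ∧ r i ≤ a)
    (he' : ∀ i, siteDegree e' i ≠ 0 → i ∈ S ∧ r i ≤ a) :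
    ∫⁻ Z, ‖siteMonomial e Z.1 * siteMonomial e' Z.2‖ₑ *
        (arcWeight σ a β S r Z.1 * arcWeight σ a β S r Z.2)
        ∂(Measure.pi fun _ => ν).prod (Measure.pi fun _ => ν) ≤
      ENNReal.ofReal (256 ^ (2 * (S.card + 1)) * (momentBound Λ e * momentBound Λ e')) *
        partitionFn σ a β ν Finset.univ ^ 2 := by
  have := hν.isProbabilityMeasure
  simp only [enorm_mul, mul_mul_mul_comm]
  rw [lintegral_prod_mul (f := fun z => ‖siteMonomial e z‖ₑ * arcWeight σ a β S r z)
    (g := fun z => ‖siteMonomial e' z‖ₑ * arcWeight σ a β S r z) (by fun_prop) (by fun_prop)]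
  refine (mul_le_mul' (hν.lintegral_siteMonomial_mul_arcWeight_le hσ hnext hprev hr he)
    (hν.lintegral_siteMonomial_mul_arcWeight_le hσ hnext hprev hr he')).trans_eq ?_
  rw [mul_mul_mul_comm, ← ENNReal.ofReal_mul
    (mul_nonneg (by positivity) (momentBound_nonneg hν.scale_nonneg e)), ← sq]
  congr 2
  ring

lemma lintegral_replicaDiff_mul_le [DecidableEq ι] (hν : HasSiteBounds ν a β Λ)
    (hσ : ∀ i, σ i ≠ i)
    (hnext : (outerBoundary σ S).card ≤ 1) (hprev : (outerBoundary σ.symm S).card ≤ 1)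
    (hr : ∀ i, r i ≤ 1 / 16) (he : ∀ i, siteDegree e i ≠ 0 → i ∈ S ∧ r i ≤ a)
    (he' : ∀ i, siteDegree e' i ≠ 0 → i ∈ S ∧ r i ≤ a)
    (hee' : ∀ i, siteDegree e i = 0 ∨ siteDegree e' i = 0)
    {C : ℝ≥0∞} {F : (ι → ℝ × ℝ) × (ι → ℝ × ℝ) → ℝ}
    (hF : ∀ Z, ‖F Z‖ₑ ≤ C * (arcWeight σ a β S r Z.1 * arcWeight σ a β S r Z.2)) :
    ∫⁻ Z, ‖replicaDiff (siteMonomial e) Z * replicaDiff (siteMonomial e') Z * F Z‖ₑ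
        ∂(Measure.pi fun _ => ν).prod (Measure.pi fun _ => ν) ≤
      4 * C * (ENNReal.ofReal (256 ^ (2 * (S.card + 1)) * (momentBound Λ e * momentBound Λ e')) *
        partitionFn σ a β ν Finset.univ ^ 2) := by
  set q : (ι ⊕ ι →₀ ℕ) → (ι ⊕ ι →₀ ℕ) → (ι → ℝ × ℝ) × (ι → ℝ × ℝ) → ℝ≥0∞ := fun f f' Z =>
    ‖siteMonomial f Z.1 * siteMonomial f' Z.2‖ₑ *
      (arcWeight σ a β S r Z.1 * arcWeight σ a β S r Z.2) with hq
  set Y := ENNReal.ofReal (256 ^ (2 * (S.card + 1)) * (momentBound Λ e * momentBound Λ e')) *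
    partitionFn σ a β ν Finset.univ ^ 2
  have hbound {f f'} := hν.lintegral_siteMonomial_mul_siteMonomial_mul_arcWeight_le hσ hnext hprev
    hr (e := f) (e' := f')
  have hadd : ∀ i, siteDegree (e + e') i ≠ 0 → i ∈ S ∧ r i ≤ a := fun i hi => by
    rw [siteDegree_add, Ne, Nat.add_eq_zero_iff, not_and_or] at hi
    exact hi.elim (he i) (he' i)
  have hzero : ∀ i, siteDegree (0 : ι ⊕ ι →₀ ℕ) i ≠ 0 → i ∈ S ∧ r i ≤ a := fun i hi =>
    absurd rfl hi
  have h₁ := hbound hadd hzero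
  have h₂ := hbound hzero hadd
  rw [momentBound_add Λ hee', momentBound_zero, mul_one] at h₁
  rw [momentBound_add Λ hee', momentBound_zero, one_mul] at h₂
  have h₃ := hbound he he'
  have h₄ := hbound he' he
  rw [mul_comm (momentBound Λ e')] at h₄
  calc _ ≤ ∫⁻ Z, C * (q (e + e') 0 Z + q 0 (e + e') Z + q e e' Z + q e' e Z)
          ∂(Measure.pi fun _ => ν).prod (Measure.pi fun _ => ν) := by
        refine lintegral_mono fun Z => ?_
        rw [enorm_mul]
        refine (mul_le_mul' le_rfl (hF Z)).trans ?_
        rw [mul_left_comm]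
        simp only [hq, ← add_mul]
        exact mul_le_mul' le_rfl
          (mul_le_mul' (enorm_replicaDiff_siteMonomial_mul_le e e' Z) le_rfl)
    _ ≤ C * (Y + Y + Y + Y) := by
        rw [lintegral_const_mul _ (by fun_prop), lintegral_add_right _ (by fun_prop),
          lintegral_add_right _ (by fun_prop), lintegral_add_right _ (by fun_prop)]
        exact mul_le_mul' le_rfl (add_le_add (add_le_add (add_le_add h₁ h₂) h₃) h₄)
    _ = _ := by ring

lemma integrable_replicaDiff_mul_clusterWeight (hν : HasSiteBounds ν a β Λ) (hσ : ∀ i, σ i ≠ i)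
    (hee' : ∀ i, siteDegree e i = 0 ∨ siteDegree e' i = 0) {T E : Finset ι} (hTE : Disjoint T E) :
    Integrable (fun Z => replicaDiff (siteMonomial e) Z * replicaDiff (siteMonomial e') Z *
        clusterWeight (fun j => replicaBond σ a β j Z) T E)
      ((Measure.pi fun _ => ν).prod (Measure.pi fun _ => ν)) := by
  classical
  have ha := hν.coupling_pos.le
  refine ⟨by unfold clusterWeight replicaDiff; fun_prop, ?_⟩
  have hbound := hν.lintegral_replicaDiff_mul_le hσ (S := Finset.univ) (r := 0)
    (by simp [outerBoundary]) (by simp [outerBoundary]) (fun _ => by norm_num)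
    (fun i _ => ⟨Finset.mem_univ i, ha⟩) (fun i _ => ⟨Finset.mem_univ i, ha⟩) hee' (C := 1)
    (F := fun Z => clusterWeight (fun j => replicaBond σ a β j Z) T E) fun Z => by
      simpa only [one_mul] using
        enorm_clusterWeight_replicaBond_le_arcWeight_univ σ hν.beta_pos.le ha hTE Z
  refine hbound.trans_lt
    (ENNReal.mul_lt_top (by finiteness) (ENNReal.mul_lt_top (by finiteness) ?_))
  exact ENNReal.pow_lt_top (hν.partitionFn_ne_top _).lt_top

end HasSiteBounds

/-! ### Cancellations between replicas -/

section ReplicaCancellation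

variable {ι : Type*} [DecidableEq ι] {σ : Equiv.Perm ι} {a β : ℝ}

lemma replicaBond_replicaSwap {A : Finset ι} {j : ι} (h : j ∈ A ↔ σ.symm j ∈ A)
    (Z : (ι → ℝ × ℝ) × (ι → ℝ × ℝ)) :
    replicaBond σ a β j (replicaSwap A Z) = replicaBond σ a β j Z := by
  by_cases hj : j ∈ A
  · simp only [replicaBond, bondExponent, replicaSwap, Finset.piecewise_eq_of_mem _ _ _ hj,
      Finset.piecewise_eq_of_mem _ _ _ (h.1 hj), add_comm]
  · simp only [replicaBond, bondExponent, replicaSwap, Finset.piecewise_eq_of_notMem _ _ _ hj,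
      Finset.piecewise_eq_of_notMem _ _ _ (mt h.2 hj)]

lemma clusterWeight_replicaBond_replicaSwap {A T E : Finset ι}
    (h : ∀ j ∈ T ∪ E, (j ∈ A ↔ σ.symm j ∈ A)) (Z : (ι → ℝ × ℝ) × (ι → ℝ × ℝ)) :
    clusterWeight (fun j => replicaBond σ a β j (replicaSwap A Z)) T E =
      clusterWeight (fun j => replicaBond σ a β j Z) T E := by
  refine congrArg₂ (· * ·) ?_ ?_ <;> refine Finset.prod_congr rfl fun j hj => ?_ <;>
    simp only [replicaBond_replicaSwap (h j (by simp [hj]))]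

/-- `G₁` and `G₂` are the sets of bonds of the two gaps between the blocks of sites `B` and `B'`:
removing a bond from each of them cuts the chain into two arcs, one of which contains `B` and the
other `B'`. -/
structure AreSeparatingGaps (σ : Equiv.Perm ι) (B B' G₁ G₂ : Finset ι) : Prop where
  disjoint : Disjoint G₁ G₂
  exists_arc : ∀ j ∈ G₁, ∀ j' ∈ G₂, ∃ A : Finset ι, B ⊆ A ∧ Disjoint B' A ∧
    ∀ k, k ≠ j → k ≠ j' → (k ∈ A ↔ σ.symm k ∈ A)

variable [Fintype ι]

/-- Twice the covariance of `f` and `g`, written in two replicas, with the product of the bond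
weights replaced by a cluster weight. -/
noncomputable def clusterIntegral (σ : Equiv.Perm ι) (a β : ℝ) (ν : Measure (ℝ × ℝ))
    (f g : (ι → ℝ × ℝ) → ℝ) (T E : Finset ι) : ℝ :=
  ∫ Z, replicaDiff f Z * replicaDiff g Z * clusterWeight (fun j => replicaBond σ a β j Z) T E
    ∂(Measure.pi fun _ => ν).prod (Measure.pi fun _ => ν)

namespace AreSeparatingGaps

variable {B B' G₁ G₂ T₁ T₂ : Finset ι} {ν : Measure (ℝ × ℝ)} {f g : (ι → ℝ × ℝ) → ℝ}

lemma clusterIntegral_eq_zero [SigmaFinite ν] (hG : AreSeparatingGaps σ B B' G₁ G₂)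
    (hf : Measurable f) (hg : Measurable g) (hfB : DependsOn f B) (hgB' : DependsOn g B')
    (h₁ : T₁ ⊂ G₁) (h₂ : T₂ ⊂ G₂) :
    clusterIntegral σ a β ν f g (T₁ ∪ T₂) (G₁ ∪ G₂)ᶜ = 0 := by
  obtain ⟨j, hjG, hjT⟩ := Finset.exists_of_ssubset h₁
  obtain ⟨j', hjG', hjT'⟩ := Finset.exists_of_ssubset h₂
  obtain ⟨A, hBA, hB'A, hA⟩ := hG.exists_arc j hjG j' hjG'
  have hbonds : ∀ k ∈ T₁ ∪ T₂ ∪ (G₁ ∪ G₂)ᶜ, (k ∈ A ↔ σ.symm k ∈ A) := fun k hk => by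
    have hdisj := Finset.disjoint_left.1 hG.disjoint
    have hT₁ := h₁.subset
    have hT₂ := h₂.subset
    refine hA k ?_ ?_ <;> rintro rfl <;>
      simp only [Finset.mem_union, Finset.mem_compl] at hk <;> grind
  refine integral_eq_zero_of_replicaSwap_eq_neg _ A
    (by unfold clusterWeight replicaDiff; fun_prop) fun Z => ?_
  rw [replicaDiff_replicaSwap_of_subset hfB hBA, replicaDiff_replicaSwap_of_disjoint hgB' hB'A,
    clusterWeight_replicaBond_replicaSwap hbonds]
  ring

lemma clusterIntegral_eq [SigmaFinite ν] (hG : AreSeparatingGaps σ B B' G₁ G₂)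
    (hf : Measurable f) (hg : Measurable g) (hfB : DependsOn f B) (hgB' : DependsOn g B')
    (hint : ∀ T E : Finset ι, Disjoint T E → Integrable
      (fun Z => replicaDiff f Z * replicaDiff g Z *
        clusterWeight (fun j => replicaBond σ a β j Z) T E)
      ((Measure.pi fun _ => ν).prod (Measure.pi fun _ => ν))) :
    clusterIntegral σ a β ν f g ∅ Finset.univ =
      clusterIntegral σ a β ν f g G₁ G₁ᶜ + clusterIntegral σ a β ν f g G₂ G₂ᶜ -
        clusterIntegral σ a β ν f g (G₁ ∪ G₂) (G₁ ∪ G₂)ᶜ := by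
  have hint_gap (G : Finset ι) := hint G Gᶜ disjoint_compl_right
  have hint_cut {T₁ T₂ : Finset ι} (h₁ : T₁ ∈ G₁.ssubsets) (h₂ : T₂ ∈ G₂.ssubsets) :=
    hint (T₁ ∪ T₂) (G₁ ∪ G₂)ᶜ (disjoint_compl_right.mono_left (Finset.union_subset_union
      (Finset.mem_ssubsets.1 h₁).subset (Finset.mem_ssubsets.1 h₂).subset))
  have hcut : ∫ Z, ∑ T₁ ∈ G₁.ssubsets, ∑ T₂ ∈ G₂.ssubsets, replicaDiff f Z * replicaDiff g Z *
      clusterWeight (fun j => replicaBond σ a β j Z) (T₁ ∪ T₂) (G₁ ∪ G₂)ᶜ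
      ∂(Measure.pi fun _ => ν).prod (Measure.pi fun _ => ν) = 0 := by
    rw [integral_finsetSum _ fun T₁ h₁ => integrable_finsetSum _ fun T₂ h₂ => hint_cut h₁ h₂]
    refine Finset.sum_eq_zero fun T₁ h₁ => ?_
    rw [integral_finsetSum _ fun T₂ h₂ => hint_cut h₁ h₂]
    exact Finset.sum_eq_zero fun T₂ h₂ => hG.clusterIntegral_eq_zero hf hg hfB hgB'
      (Finset.mem_ssubsets.1 h₁) (Finset.mem_ssubsets.1 h₂)
  have hexpand (Z : (ι → ℝ × ℝ) × (ι → ℝ × ℝ)) :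
      clusterWeight (fun j => replicaBond σ a β j Z) ∅ Finset.univ = _ :=
    (one_mul _).trans (prod_eq_clusterWeight (fun j => replicaBond σ a β j Z) hG.disjoint)
  simp only [clusterIntegral, hexpand, mul_add, mul_sub, Finset.mul_sum]
  refine (integral_add (((hint_gap _).add (hint_gap _)).sub (hint_gap _))
    (integrable_finsetSum _ fun T₁ h₁ => integrable_finsetSum _ fun T₂ h₂ =>
      hint_cut h₁ h₂)).trans ?_
  rw [hcut, add_zero]
  refine (integral_sub ((hint_gap _).add (hint_gap _)) (hint_gap _)).trans ?_
  exact congrArg (· - _) (integral_add (hint_gap _) (hint_gap _))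

end AreSeparatingGaps

end ReplicaCancellation

/-! ### Decay of the cluster integrals -/

section Decay

variable {ι : Type*} [DecidableEq ι] {σ : Equiv.Perm ι}

/-- The rates of the additional Gaussian weights spent on expanded bonds: in the blocks `B`, where
the observables live, only the rate `a` is affordable. -/
noncomputable def gapRate (a : ℝ) (B : Finset ι) (i : ι) : ℝ := if i ∈ B then a else 1 / 16

variable {a : ℝ}

lemma gapRate_pos (ha : 0 < a) (B : Finset ι) (i : ι) : 0 < gapRate a B i := by
  unfold gapRate; split_ifs <;> positivity

lemma gapRate_le (ha16 : a ≤ 1 / 16) (B : Finset ι) (i : ι) : gapRate a B i ≤ 1 / 16 := by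
  unfold gapRate; split_ifs <;> linarith

lemma prod_inv_sqrt_gapRate_le (ha : 0 < a) (ha1 : a ≤ 1) {B G : Finset ι} {n : ℕ} {τ : ι → ι}
    (hn : (G.filter fun j => τ j ∈ B).card ≤ n) :
    ∏ j ∈ G, (√(gapRate a B (τ j)))⁻¹ ≤ 4 ^ G.card * (√a)⁻¹ ^ n := by
  have hsqrt : 1 ≤ (√a)⁻¹ := (one_le_inv₀ (Real.sqrt_pos.2 ha)).2 (Real.sqrt_le_one.2 ha1)
  have hfour : √(1 / 16) = 4⁻¹ := by
    rw [show (1 / 16 : ℝ) = 4⁻¹ ^ 2 by norm_num, Real.sqrt_sq (by norm_num)]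
  calc ∏ j ∈ G, (√(gapRate a B (τ j)))⁻¹
      ≤ ∏ j ∈ G, (4 * if τ j ∈ B then (√a)⁻¹ else 1) := by
        refine Finset.prod_le_prod (fun j _ => by positivity) fun j _ => ?_
        unfold gapRate
        split_ifs
        · linarith
        · rw [hfour, inv_inv, mul_one]
    _ = 4 ^ G.card * (√a)⁻¹ ^ (G.filter fun j => τ j ∈ B).card := by
        rw [Finset.prod_mul_distrib, Finset.prod_const, ← Finset.prod_filter, Finset.prod_const]
    _ ≤ _ := by gcongr

variable [Fintype ι]

/-- `S` is an arc consisting of the sites of the blocks `B` and of gaps between them with bonds `G`,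
of which at most `n` enter and at most `n` leave a block. -/
structure IsGapArc (σ : Equiv.Perm ι) (B G S : Finset ι) (n : ℕ) : Prop where
  subset : B ⊆ S
  interior : ∀ j ∈ G, j ∈ S ∧ σ.symm j ∈ S
  card_outerBoundary_le : (outerBoundary σ S).card ≤ 1
  card_outerBoundary_symm_le : (outerBoundary σ.symm S).card ≤ 1
  card_entering_le : (G.filter fun j => j ∈ B).card ≤ n
  card_leaving_le : (G.filter fun j => σ.symm j ∈ B).card ≤ n
  card_lt : S.card < B.card + G.card

lemma IsGapArc.union {B G₁ G₂ S₁ S₂ : Finset ι} {n₁ n₂ : ℕ} (h₁ : IsGapArc σ B G₁ S₁ n₁)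
    (h₂ : IsGapArc σ B G₂ S₂ n₂) (h : Fintype.card ι < B.card + (G₁ ∪ G₂).card) :
    IsGapArc σ B (G₁ ∪ G₂) Finset.univ (n₁ + n₂) where
  subset := B.subset_univ
  interior _ _ := ⟨Finset.mem_univ _, Finset.mem_univ _⟩
  card_outerBoundary_le := by simp [outerBoundary]
  card_outerBoundary_symm_le := by simp [outerBoundary]
  card_entering_le := by
    rw [Finset.filter_union]
    exact (Finset.card_union_le _ _).trans (add_le_add h₁.card_entering_le h₂.card_entering_le)
  card_leaving_le := by
    rw [Finset.filter_union]
    exact (Finset.card_union_le _ _).trans (add_le_add h₁.card_leaving_le h₂.card_leaving_le)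
  card_lt := h

lemma IsGapArc.prod_bondCost_le {B G S : Finset ι} {n : ℕ} (h : IsGapArc σ B G S n) (ha : 0 < a)
    (ha1 : a ≤ 1) :
    ∏ j ∈ G, bondCost σ a (gapRate a B) j ≤ ENNReal.ofReal ((16 * a) ^ G.card * a⁻¹ ^ n) := by
  unfold bondCost
  rw [← ENNReal.ofReal_prod_of_nonneg fun j _ => by positivity]
  refine ENNReal.ofReal_le_ofReal ?_
  calc ∏ j ∈ G, a / (√(gapRate a B j) * √(gapRate a B (σ.symm j)))
      = a ^ G.card * ((∏ j ∈ G, (√(gapRate a B j))⁻¹) *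
          ∏ j ∈ G, (√(gapRate a B (σ.symm j)))⁻¹) := by
        simp only [div_eq_mul_inv, mul_inv, Finset.prod_mul_distrib, Finset.prod_const]
    _ ≤ a ^ G.card * ((4 ^ G.card * (√a)⁻¹ ^ n) * (4 ^ G.card * (√a)⁻¹ ^ n)) := by
        gcongr
        · exact prod_inv_sqrt_gapRate_le ha ha1 (τ := id) h.card_entering_le
        · exact prod_inv_sqrt_gapRate_le ha ha1 h.card_leaving_le
    _ = (16 * a) ^ G.card * a⁻¹ ^ n := by
        have hinv : a⁻¹ = (√a)⁻¹ * (√a)⁻¹ := by rw [← mul_inv, Real.mul_self_sqrt ha.le]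
        rw [hinv, show (16 : ℝ) = 4 * 4 by norm_num, mul_pow, mul_pow, mul_pow]
        ring

lemma gap_decay_le {d n g s b : ℕ} (ha : 0 < a) (ha20 : a ≤ 1 / 2 ^ 20) (hn : n ≤ 2)
    (hdn : d + n ≤ g) (hs : s < b + g) :
    4 * ((16 * a) ^ g * a⁻¹ ^ n) * 256 ^ (2 * (s + 1)) ≤
      2 ^ 42 * 256 ^ (2 * b) * (2 ^ 20 * a) ^ d := by
  obtain ⟨k, rfl⟩ := Nat.exists_eq_add_of_le hdn
  have hle_one : 2 ^ 20 * a ≤ 1 := by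
    rw [le_div_iff₀ (by positivity)] at ha20
    linarith
  calc 4 * ((16 * a) ^ (d + n + k) * a⁻¹ ^ n) * 256 ^ (2 * (s + 1))
      ≤ 4 * ((16 * a) ^ (d + n + k) * a⁻¹ ^ n) * 256 ^ (2 * (b + (d + n + k))) := by
        exact mul_le_mul_of_nonneg_left (pow_le_pow_right₀ (by norm_num) (by omega))
          (by positivity)
    _ = 4 * 256 ^ (2 * b) * ((16 * a * 256 ^ 2) ^ (d + n + k) * a⁻¹ ^ n) := by
        rw [mul_add 2 b, pow_add 256 (2 * b), pow_mul 256 2 (d + n + k), mul_pow _ (256 ^ 2)]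
        ring
    _ = 4 * 256 ^ (2 * b) * ((2 ^ 20 * a) ^ d * (2 ^ 20 * a) ^ k * (2 ^ 20) ^ n) := by
        rw [show 16 * a * 256 ^ 2 = 2 ^ 20 * a by ring, pow_add, pow_add, mul_pow _ a n, inv_pow]
        field_simp
    _ ≤ 4 * 256 ^ (2 * b) * ((2 ^ 20 * a) ^ d * 1 * (2 ^ 20) ^ 2) := by
        gcongr
        · exact pow_le_one₀ (by positivity) hle_one
        · norm_num
    _ = _ := by ring

end Decay

namespace HasSiteBounds

variable {ι : Type*} [DecidableEq ι] [Fintype ι] [Nonempty ι] {σ : Equiv.Perm ι}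
  {ν : Measure (ℝ × ℝ)} {a β Λ : ℝ} {B B' : Finset ι} {e e' : ι ⊕ ι →₀ ℕ}

lemma abs_clusterIntegral_le (hν : HasSiteBounds ν a β Λ) (hσ : ∀ i, σ i ≠ i)
    (ha20 : a ≤ 1 / 2 ^ 20) (he : ∀ i ∉ B, siteDegree e i = 0)
    (he' : ∀ i ∉ B, siteDegree e' i = 0)
    (hee' : ∀ i, siteDegree e i = 0 ∨ siteDegree e' i = 0) {G S : Finset ι} {d n : ℕ}
    (hG : IsGapArc σ B G S n) (hn : n ≤ 2) (hdn : d + n ≤ G.card) :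
    |clusterIntegral σ a β ν (siteMonomial e) (siteMonomial e') G Gᶜ| ≤
      2 ^ 42 * 256 ^ (2 * B.card) * (2 ^ 20 * a) ^ d * (momentBound Λ e * momentBound Λ e') *
        (partitionFn σ a β ν Finset.univ).toReal ^ 2 := by
  have ha := hν.coupling_pos
  have hM : 0 ≤ momentBound Λ e * momentBound Λ e' :=
    mul_nonneg (momentBound_nonneg hν.scale_nonneg e) (momentBound_nonneg hν.scale_nonneg e')
  have hrate {f : ι ⊕ ι →₀ ℕ} (hf : ∀ i ∉ B, siteDegree f i = 0) (i : ι)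
      (hi : siteDegree f i ≠ 0) : i ∈ S ∧ gapRate a B i ≤ a := by
    have hiB : i ∈ B := by_contra fun h => hi (hf i h)
    exact ⟨hG.subset hiB, by simp [gapRate, hiB]⟩
  have hbound := (enorm_integral_le_lintegral_enorm _).trans <|
    hν.lintegral_replicaDiff_mul_le hσ hG.card_outerBoundary_le hG.card_outerBoundary_symm_le
      (gapRate_le hν.coupling_le B) (hrate he) (hrate he') hee' fun Z =>
        (enorm_clusterWeight_replicaBond_le σ hν.beta_pos.le ha.le (gapRate_pos ha B) hG.interior
          Z).trans (mul_le_mul' (hG.prod_bondCost_le ha (by linarith [hν.coupling_le])) le_rfl)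
  have hreal := ENNReal.toReal_mono
    (by have := hν.partitionFn_ne_top (σ := σ) Finset.univ; finiteness) hbound
  rw [toReal_enorm, Real.norm_eq_abs, ENNReal.toReal_mul, ENNReal.toReal_mul, ENNReal.toReal_mul,
    ENNReal.toReal_pow, ENNReal.toReal_ofReal (by positivity),
    ENNReal.toReal_ofReal (by positivity), ENNReal.toReal_ofNat] at hreal
  refine hreal.trans ?_
  rw [← mul_assoc, ← mul_assoc]
  gcongr ?_ * _ * _
  exact gap_decay_le ha ha20 hn hdn hG.card_lt

theorem abs_clusterIntegral_univ_le (hν : HasSiteBounds ν a β Λ) (hσ : ∀ i, σ i ≠ i)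
    (ha20 : a ≤ 1 / 2 ^ 20) (hBB' : Disjoint B B') (he : ∀ i ∉ B, siteDegree e i = 0)
    (he' : ∀ i ∉ B', siteDegree e' i = 0) {G₁ G₂ S₁ S₂ : Finset ι} {d : ℕ}
    (hG : AreSeparatingGaps σ B B' G₁ G₂) (h₁ : IsGapArc σ (B ∪ B') G₁ S₁ 1)
    (h₂ : IsGapArc σ (B ∪ B') G₂ S₂ 1) (hcard : Fintype.card ι < (B ∪ B').card + (G₁ ∪ G₂).card)
    (hd₁ : d + 1 ≤ G₁.card) (hd₂ : d + 1 ≤ G₂.card) :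
    |clusterIntegral σ a β ν (siteMonomial e) (siteMonomial e') ∅ Finset.univ| ≤
      3 * (2 ^ 42 * 256 ^ (2 * (B ∪ B').card) * (2 ^ 20 * a) ^ d *
        (momentBound Λ e * momentBound Λ e') *
          (partitionFn σ a β ν Finset.univ).toReal ^ 2) := by
  have := hν.isProbabilityMeasure
  have hee' (i : ι) : siteDegree e i = 0 ∨ siteDegree e' i = 0 := by
    by_cases hi : i ∈ B
    · exact .inr (he' i (Finset.disjoint_left.1 hBB' hi))
    · exact .inl (he i hi)
  have hbound {G S : Finset ι} {n : ℕ} (h : IsGapArc σ (B ∪ B') G S n) :=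
    hν.abs_clusterIntegral_le hσ ha20 (d := d) (fun i hi => he i fun h => hi (by simp [h]))
      (fun i hi => he' i fun h => hi (by simp [h])) hee' h
  have hcardG : (G₁ ∪ G₂).card = G₁.card + G₂.card := Finset.card_union_of_disjoint hG.disjoint
  rw [hG.clusterIntegral_eq (measurable_siteMonomial e) (measurable_siteMonomial e')
    (dependsOn_siteMonomial he) (dependsOn_siteMonomial he')
    fun T E hTE => hν.integrable_replicaDiff_mul_clusterWeight hσ hee' hTE]
  refine (abs_sub _ _).trans (((add_le_add_left (abs_add_le _ _) _)).trans ?_)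
  linarith [hbound h₁ one_le_two hd₁, hbound h₂ one_le_two hd₂,
    hbound (h₁.union h₂ hcard) le_rfl (by omega)]

end HasSiteBounds

/-! ### Blocks on the ring -/

section Ring

variable {N : ℕ}

lemma val_finRotate (i : Fin N) :
    (finRotate N i : ℕ) = if (i : ℕ) + 1 = N then 0 else (i : ℕ) + 1 := by
  obtain _ | n := N
  · exact i.elim0
  · rw [coe_finRotate]
    simp [Fin.ext_iff]

lemma val_finRotate_symm (i : Fin N) :
    ((finRotate N).symm i : ℕ) = if (i : ℕ) = 0 then N - 1 else (i : ℕ) - 1 := by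
  obtain ⟨j, rfl⟩ := (finRotate N).surjective i
  have hj := j.isLt
  rw [Equiv.symm_apply_apply, val_finRotate]
  grind

lemma finRotate_ne_self (hN : 2 ≤ N) (i : Fin N) : finRotate N i ≠ i := fun h => by
  have hval := congrArg Fin.val h
  rw [val_finRotate] at hval
  split_ifs at hval <;> omega

variable {p q t u : Fin N}

lemma card_Icc_union_Icc (hpq : p ≤ q) (hqt : q < t) (htu : t ≤ u) :
    (Finset.Icc p q ∪ Finset.Icc t u).card = (q - p) + (u - t) + 2 := by
  rw [Finset.card_union_of_disjoint, Fin.card_Icc, Fin.card_Icc]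
  · omega
  · exact Finset.disjoint_left.2 fun i => by simp only [Finset.mem_Icc]; omega

lemma card_Ioi_union_Iic (hpu : p < u) : (Finset.Ioi u ∪ Finset.Iic p).card = N - u + p := by
  rw [Finset.card_union_of_disjoint, Fin.card_Ioi, Fin.card_Iic]
  · omega
  · exact Finset.disjoint_left.2 fun i => by simp only [Finset.mem_Ioi, Finset.mem_Iic]; omega

lemma areSeparatingGaps_finRotate (hpq : p ≤ q) (htu : t ≤ u) :
    AreSeparatingGaps (finRotate N) (Finset.Icc p q) (Finset.Icc t u) (Finset.Ioc q t)
      (Finset.Ioi u ∪ Finset.Iic p) where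
  disjoint := Finset.disjoint_left.2 fun i => by
    simp only [Finset.mem_Ioc, Finset.mem_union, Finset.mem_Ioi, Finset.mem_Iic]; omega
  exists_arc j hj j' hj' := by
    simp only [Finset.mem_Ioc, Finset.mem_union, Finset.mem_Ioi, Finset.mem_Iic] at hj hj'
    have hstep (A : Finset (Fin N)) (hA : ∀ i, i ∈ A ↔ if j' ≤ p then j' ≤ i ∧ i < j else
        j' ≤ i ∨ i < j) : Finset.Icc p q ⊆ A ∧ Disjoint (Finset.Icc t u) A ∧
        ∀ k, k ≠ j → k ≠ j' → (k ∈ A ↔ (finRotate N).symm k ∈ A) := by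
      refine ⟨fun i hi => ?_, Finset.disjoint_left.2 fun i hi => ?_, fun k hkj hkj' => ?_⟩
      · rw [Finset.mem_Icc] at hi
        rw [hA]
        split_ifs <;> omega
      · rw [Finset.mem_Icc] at hi
        rw [hA]
        split_ifs <;> omega
      · have hval := val_finRotate_symm k
        rw [hA, hA]
        split_ifs at hval ⊢ <;> omega
    exact ⟨({i | if j' ≤ p then j' ≤ i ∧ i < j else j' ≤ i ∨ i < j} : Finset (Fin N)),
      hstep _ fun i => by simp⟩

lemma isGapArc_finRotate_Icc (hpq : p ≤ q) (hqt : q < t) (htu : t ≤ u) :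
    IsGapArc (finRotate N) (Finset.Icc p q ∪ Finset.Icc t u) (Finset.Ioc q t)
      (Finset.Icc p u) 1 where
  subset i hi := by
    simp only [Finset.mem_union, Finset.mem_Icc] at hi ⊢; omega
  interior j hj := by
    have hval := val_finRotate_symm j
    simp only [Finset.mem_Ioc, Finset.mem_Icc] at hj ⊢
    split_ifs at hval <;> omega
  card_outerBoundary_le := Finset.card_le_one.2 fun i hi j hj => by
    have hi' := val_finRotate_symm i
    have hj' := val_finRotate_symm j
    simp only [outerBoundary, Finset.mem_filter_univ, Finset.mem_Icc] at hi hj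
    split_ifs at hi' hj' <;> omega
  card_outerBoundary_symm_le := Finset.card_le_one.2 fun i hi j hj => by
    have hi' := val_finRotate i
    have hj' := val_finRotate j
    simp only [outerBoundary, Equiv.symm_symm, Finset.mem_filter_univ, Finset.mem_Icc] at hi hj
    split_ifs at hi' hj' <;> omega
  card_entering_le := Finset.card_le_one.2 fun i hi j hj => by
    simp only [Finset.mem_filter, Finset.mem_Ioc, Finset.mem_union, Finset.mem_Icc] at hi hj
    omega
  card_leaving_le := Finset.card_le_one.2 fun i hi j hj => by
    have hi' := val_finRotate_symm i
    have hj' := val_finRotate_symm j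
    simp only [Finset.mem_filter, Finset.mem_Ioc, Finset.mem_union, Finset.mem_Icc] at hi hj
    split_ifs at hi' hj' <;> omega
  card_lt := by
    rw [card_Icc_union_Icc hpq hqt htu, Fin.card_Icc, Fin.card_Ioc]; omega

lemma isGapArc_finRotate_Ici_union_Iic (hpq : p ≤ q) (hqt : q < t) (htu : t ≤ u) :
    IsGapArc (finRotate N) (Finset.Icc p q ∪ Finset.Icc t u) (Finset.Ioi u ∪ Finset.Iic p)
      (Finset.Ici t ∪ Finset.Iic q) 1 where
  subset i hi := by
    simp only [Finset.mem_union, Finset.mem_Icc, Finset.mem_Ici, Finset.mem_Iic] at hi ⊢; omega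
  interior j hj := by
    have hval := val_finRotate_symm j
    simp only [Finset.mem_union, Finset.mem_Ioi, Finset.mem_Ici, Finset.mem_Iic] at hj ⊢
    split_ifs at hval <;> omega
  card_outerBoundary_le := Finset.card_le_one.2 fun i hi j hj => by
    have hi' := val_finRotate_symm i
    have hj' := val_finRotate_symm j
    simp only [outerBoundary, Finset.mem_filter_univ, Finset.mem_union, Finset.mem_Ici,
      Finset.mem_Iic] at hi hj
    split_ifs at hi' hj' <;> omega
  card_outerBoundary_symm_le := Finset.card_le_one.2 fun i hi j hj => by
    have hi' := val_finRotate i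
    have hj' := val_finRotate j
    simp only [outerBoundary, Equiv.symm_symm, Finset.mem_filter_univ, Finset.mem_union,
      Finset.mem_Ici, Finset.mem_Iic] at hi hj
    split_ifs at hi' hj' <;> omega
  card_entering_le := Finset.card_le_one.2 fun i hi j hj => by
    simp only [Finset.mem_filter, Finset.mem_union, Finset.mem_Ioi, Finset.mem_Iic,
      Finset.mem_Icc] at hi hj
    omega
  card_leaving_le := Finset.card_le_one.2 fun i hi j hj => by
    have hi' := val_finRotate_symm i
    have hj' := val_finRotate_symm j
    simp only [Finset.mem_filter, Finset.mem_union, Finset.mem_Ioi, Finset.mem_Iic,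
      Finset.mem_Icc] at hi hj
    split_ifs at hi' hj' <;> omega
  card_lt := by
    rw [card_Icc_union_Icc hpq hqt htu, card_Ioi_union_Iic (by omega),
      Finset.card_union_of_disjoint, Fin.card_Ici, Fin.card_Iic]
    · omega
    · exact Finset.disjoint_left.2 fun i => by simp only [Finset.mem_Ici, Finset.mem_Iic]; omega

theorem HasSiteBounds.abs_clusterIntegral_finRotate_le {ν : Measure (ℝ × ℝ)} {a β Λ : ℝ}
    {e e' : Fin N ⊕ Fin N →₀ ℕ} (hν : HasSiteBounds ν a β Λ) (ha20 : a ≤ 1 / 2 ^ 20)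
    (hpq : p ≤ q) (hqt : q < t) (htu : t ≤ u)
    (he : ∀ i ∉ Finset.Icc p q, siteDegree e i = 0)
    (he' : ∀ i ∉ Finset.Icc t u, siteDegree e' i = 0) :
    |clusterIntegral (finRotate N) a β ν (siteMonomial e) (siteMonomial e') ∅ Finset.univ| ≤
      3 * (2 ^ 42 * 256 ^ (2 * ((q - p) + (u - t) + 2 : ℕ)) *
        (2 ^ 20 * a) ^ min (t - q - 1 : ℕ) (N - u + p - 1) *
          (momentBound Λ e * momentBound Λ e') *
            (partitionFn (finRotate N) a β ν Finset.univ).toReal ^ 2) := by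
  have : Nonempty (Fin N) := ⟨p⟩
  have hG := areSeparatingGaps_finRotate hpq htu
  have hB := card_Icc_union_Icc hpq hqt htu
  have hG₁ : (Finset.Ioc q t).card = t - q := Fin.card_Ioc ..
  have hG₂ : (Finset.Ioi u ∪ Finset.Iic p).card = N - u + p := card_Ioi_union_Iic (by omega)
  rw [← hB]
  refine hν.abs_clusterIntegral_univ_le (finRotate_ne_self (by omega)) ha20 ?_ he he' hG
    (isGapArc_finRotate_Icc hpq hqt htu) (isGapArc_finRotate_Ici_union_Iic hpq hqt htu) ?_ ?_ ?_
  · exact Finset.disjoint_left.2 fun i => by simp only [Finset.mem_Icc]; omega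
  · rw [Finset.card_union_of_disjoint hG.disjoint, hB, hG₁, hG₂, Fintype.card_fin]; omega
  · omega
  · omega

end Ring

/-! ### Tilted measures -/

section Tilted

variable {α α' : Type*} [MeasurableSpace α] [MeasurableSpace α']

lemma prod_tilted {μ : Measure α} {μ' : Measure α'} [SFinite μ] [SFinite μ'] {f : α → ℝ}
    {g : α' → ℝ} (hf : Measurable f) (hg : Measurable g) :
    (μ.tilted f).prod (μ'.tilted g) = (μ.prod μ').tilted fun z => f z.1 + g z.2 := by
  unfold Measure.tilted
  rw [prod_withDensity (by fun_prop) (by fun_prop)]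
  congr 1 with z
  simp only [Real.exp_add]
  rw [integral_prod_mul (fun x => Real.exp (f x)) fun y => Real.exp (g y),
    ← ENNReal.ofReal_mul (by positivity), mul_div_mul_comm]

lemma pi_tilted {ι : Type*} [Fintype ι] (μ : Measure α) [SigmaFinite μ] (f : α → ℝ) :
    Measure.pi (fun _ : ι => μ.tilted f) =
      (Measure.pi fun _ => μ).tilted fun z => ∑ i, f (z i) := by
  refine Measure.pi_eq fun s hs => ?_
  have hprod (m : ι → Measure α) [∀ i, SigmaFinite (m i)] :
      ∫ z, ∏ i, Real.exp (f (z i)) ∂Measure.pi m = ∏ i, ∫ x, Real.exp (f x) ∂m i :=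
    integral_fintype_prod_eq_prod fun _ x => Real.exp (f x)
  rw [tilted_apply_eq_ofReal_integral' _ (.univ_pi hs), Measure.restrict_pi_pi]
  simp only [Real.exp_sum, tilted_apply_eq_ofReal_integral' _ (hs _), integral_div, hprod]
  rw [← Finset.prod_div_distrib, ENNReal.ofReal_prod_of_nonneg fun i _ => by positivity]

lemma integral_tilted_comp {μ : Measure α} {μ' : Measure α'} {e : α ≃ᵐ α'}
    (he : MeasurePreserving e μ μ') (f g : α' → ℝ) :
    ∫ x, g (e x) ∂μ.tilted (fun x => f (e x)) = ∫ y, g y ∂μ'.tilted f := by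
  rw [integral_tilted, integral_tilted, he.integral_comp' fun y => Real.exp (f y)]
  exact he.integral_comp' fun y => (Real.exp (f y) / ∫ y, Real.exp (f y) ∂μ') • g y

end Tilted

section Covariance

open ProbabilityTheory

variable {ι : Type*} {X : Type*} [MeasurableSpace X] {μ : Measure (ι → X)}
  [IsProbabilityMeasure μ] {f g : (ι → X) → ℝ}

lemma integral_replicaDiff_mul (hf : MemLp f 2 μ) (hg : MemLp g 2 μ) :
    ∫ Z, replicaDiff f Z * replicaDiff g Z ∂μ.prod μ = 2 * cov[f, g; μ] := by
  have hfi := hf.integrable one_le_two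
  have hgi := hg.integrable one_le_two
  have hfg : Integrable (fun z => f z * g z) μ := hf.integrable_mul hg
  have hdiag : Integrable (fun Z : (ι → X) × (ι → X) => f Z.1 * g Z.1 + f Z.2 * g Z.2)
      (μ.prod μ) := (hfg.comp_fst μ).add (hfg.comp_snd μ)
  have hcross : Integrable (fun Z : (ι → X) × (ι → X) => f Z.1 * g Z.2 + g Z.1 * f Z.2)
      (μ.prod μ) := (hfi.mul_prod hgi).add (hgi.mul_prod hfi)
  calc ∫ Z, replicaDiff f Z * replicaDiff g Z ∂μ.prod μ
      = ∫ Z, (f Z.1 * g Z.1 + f Z.2 * g Z.2) - (f Z.1 * g Z.2 + g Z.1 * f Z.2) ∂μ.prod μ := by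
        congr 1 with Z
        rw [replicaDiff, replicaDiff]
        ring
    _ = 2 * cov[f, g; μ] := by
        rw [integral_sub hdiag hcross, integral_add (hfg.comp_fst μ) (hfg.comp_snd μ),
          integral_add (hfi.mul_prod hgi) (hgi.mul_prod hfi), integral_prod_mul, integral_prod_mul,
          integral_fun_fst fun z => f z * g z, integral_fun_snd fun z => f z * g z,
          probReal_univ, one_smul, covariance_eq_sub hf hg]
        simp only [Pi.mul_apply]
        ring

end Covariance

/-! ### The Gibbs measure of the chain -/

section ChainGibbs

variable {ι : Type*} [Fintype ι] (σ : Equiv.Perm ι) (a β : ℝ) (ν : Measure (ℝ × ℝ))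

/-- The Gibbs measure of the chain over the single-site measure `ν`, in the coordinates
`i ↦ (xᵢ, yᵢ)`. -/
noncomputable def chainGibbs : Measure (ι → ℝ × ℝ) :=
  (Measure.pi fun _ => ν).tilted fun z => ∑ j, bondExponent σ a β j z

lemma integral_exp_sum_bondExponent :
    ∫ z, Real.exp (∑ j, bondExponent σ a β j z) ∂Measure.pi (fun _ => ν) =
      (partitionFn σ a β ν Finset.univ).toReal := by
  rw [integral_eq_lintegral_of_nonneg_ae (.of_forall fun _ => (Real.exp_pos _).le) (by fun_prop)]
  simp only [partitionFn, couplingWeight, ← eexp_sum]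
  rfl

lemma integral_replicaDiff_mul_chainGibbs [IsProbabilityMeasure ν] (f g : (ι → ℝ × ℝ) → ℝ) :
    ∫ Z, replicaDiff f Z * replicaDiff g Z ∂(chainGibbs σ a β ν).prod (chainGibbs σ a β ν) =
      clusterIntegral σ a β ν f g ∅ Finset.univ /
        (partitionFn σ a β ν Finset.univ).toReal ^ 2 := by
  rw [chainGibbs, prod_tilted (by fun_prop) (by fun_prop), integral_tilted, clusterIntegral,
    ← integral_exp_sum_bondExponent, ← integral_div, sq]
  simp only [Real.exp_add, clusterWeight, replicaBond, Finset.prod_empty, one_mul,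
    Finset.prod_mul_distrib, ← Real.exp_sum]
  rw [integral_prod_mul (fun z => Real.exp (∑ j, bondExponent σ a β j z))
    fun z => Real.exp (∑ j, bondExponent σ a β j z)]
  congr 1 with Z
  rw [smul_eq_mul]
  ring

variable {σ a β ν} {Λ : ℝ} [Nonempty ι]

namespace HasSiteBounds

lemma integrable_exp_smul_siteMonomial (hν : HasSiteBounds ν a β Λ) (hσ : ∀ i, σ i ≠ i)
    (e : ι ⊕ ι →₀ ℕ) :
    Integrable (fun z => Real.exp (∑ j, bondExponent σ a β j z) • siteMonomial e z)
      (Measure.pi fun _ => ν) := by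
  classical
  have hbound := hν.lintegral_siteMonomial_mul_arcWeight_le hσ (S := Finset.univ) (r := 0) (e := e)
    (by simp [outerBoundary]) (by simp [outerBoundary]) (fun _ => by norm_num)
    fun i _ => ⟨Finset.mem_univ i, hν.coupling_pos.le⟩
  refine ⟨by fun_prop, (lintegral_mono fun z => ?_).trans_lt (hbound.trans_lt
    (ENNReal.mul_lt_top ENNReal.ofReal_lt_top (hν.partitionFn_ne_top _).lt_top))⟩
  rw [enorm_smul, enorm_exp, eexp_sum, mul_comm, arcWeight_univ_zero]
  exact mul_le_mul' le_rfl
    (couplingWeight_le_prod_quadWeight σ hν.beta_pos.le hν.coupling_pos.le _ z)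

lemma integrable_exp_sum_bondExponent (hν : HasSiteBounds ν a β Λ) (hσ : ∀ i, σ i ≠ i) :
    Integrable (fun z => Real.exp (∑ j, bondExponent σ a β j z)) (Measure.pi fun _ => ν) := by
  simpa only [siteMonomial_zero, smul_eq_mul, mul_one] using
    hν.integrable_exp_smul_siteMonomial hσ 0

lemma isProbabilityMeasure_chainGibbs (hν : HasSiteBounds ν a β Λ) (hσ : ∀ i, σ i ≠ i) :
    IsProbabilityMeasure (chainGibbs σ a β ν) :=
  have := hν.isProbabilityMeasure
  isProbabilityMeasure_tilted (hν.integrable_exp_sum_bondExponent hσ)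

lemma memLp_siteMonomial (hν : HasSiteBounds ν a β Λ) (hσ : ∀ i, σ i ≠ i) (e : ι ⊕ ι →₀ ℕ) :
    MemLp (siteMonomial e) 2 (chainGibbs σ a β ν) := by
  rw [memLp_two_iff_integrable_sq (by fun_prop)]
  simp only [sq, ← siteMonomial_add]
  exact (integrable_tilted_iff (hν.integrable_exp_sum_bondExponent hσ) _).2
    (hν.integrable_exp_smul_siteMonomial hσ (e + e))

open ProbabilityTheory in
lemma two_mul_covariance_siteMonomial (hν : HasSiteBounds ν a β Λ) (hσ : ∀ i, σ i ≠ i)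
    (e e' : ι ⊕ ι →₀ ℕ) :
    2 * cov[siteMonomial e, siteMonomial e'; chainGibbs σ a β ν] =
      clusterIntegral σ a β ν (siteMonomial e) (siteMonomial e') ∅ Finset.univ /
        (partitionFn σ a β ν Finset.univ).toReal ^ 2 := by
  have := hν.isProbabilityMeasure
  have := hν.isProbabilityMeasure_chainGibbs hσ
  rw [← integral_replicaDiff_mul_chainGibbs, integral_replicaDiff_mul
    (hν.memLp_siteMonomial hσ e) (hν.memLp_siteMonomial hσ e')]

end HasSiteBounds

end ChainGibbs

section KleinGordon

variable {a β : ℝ}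

lemma pAvg_eq_integral_tilted (N : ℕ) (a β : ℝ) (X : Phase N → ℝ) :
    pAvg N a β X = ∫ z, X z ∂volume.tilted fun z => -β * Ham N a z := by
  have hmeas : Measurable fun z : Phase N => ENNReal.ofReal (Real.exp (-β * Ham N a z)) := by
    unfold Ham
    fun_prop
  rw [pAvg, gibbs, integral_smul_measure, integral_withDensity_eq_integral_toReal_smul hmeas
    (.of_forall fun _ => ENNReal.ofReal_lt_top), integral_tilted, ENNReal.toReal_inv,
    ENNReal.toReal_ofReal (by positivity), ← integral_smul]
  congr 1 with z
  rw [ENNReal.toReal_ofReal (by positivity), smul_smul, div_eq_inv_mul]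

/-- The energy of the site `(x, y)` when its neighbours are pinned at `0`. -/
noncomputable def siteEnergy (a : ℝ) (y : ℝ × ℝ) : ℝ :=
  ((1 + 2 * a) * y.1 ^ 2 / 2 + y.1 ^ 4 / 4) + y.2 ^ 2 / 2

lemma siteGibbs_eq_tilted : siteGibbs a β = volume.tilted fun y => -β * siteEnergy a y := by
  rw [siteGibbs, quarticGibbs, quarticGibbs, prod_tilted (by fun_prop) (by fun_prop),
    Measure.volume_eq_prod]
  congr 1 with y
  rw [siteEnergy]
  ring

lemma integrable_exp_siteEnergy (hβ : 0 < β) (ha : 0 < a) :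
    Integrable fun y => Real.exp (-β * siteEnergy a y) := by
  refine ((integrable_exp_quartic (b := 1 + 2 * a) hβ (by positivity) zero_le_one).mul_prod
    (integrable_exp_quartic hβ one_pos le_rfl)).congr (.of_forall fun y => ?_)
  simp only
  rw [← Real.exp_add, siteEnergy]
  congr 1
  ring

lemma chainGibbs_siteGibbs {ι : Type*} [Fintype ι] (σ : Equiv.Perm ι) (hβ : 0 < β) (ha : 0 < a) :
    chainGibbs σ a β (siteGibbs a β) =
      volume.tilted fun z => ∑ i, (-β * siteEnergy a (z i) + bondExponent σ a β i z) := by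
  have hint : Integrable (fun z : ι → ℝ × ℝ => Real.exp (∑ i, -β * siteEnergy a (z i))) := by
    simp only [Real.exp_sum]
    exact Integrable.fintype_prod fun _ => integrable_exp_siteEnergy hβ ha
  rw [chainGibbs, siteGibbs_eq_tilted, pi_tilted, ← volume_pi, tilted_tilted hint]
  simp only [Finset.sum_add_distrib]
  rfl

/-- The two orderings of the coordinates of phase space: site by site, and positions before
momenta. -/
def phaseEquiv (N : ℕ) : (Fin N → ℝ × ℝ) ≃ᵐ Phase N :=
  MeasurableEquiv.arrowProdEquivProdArrow ℝ ℝ (Fin N)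

lemma neg_mul_ham_phaseEquiv {N : ℕ} (a β : ℝ) (z : Fin N → ℝ × ℝ) :
    -β * Ham N a (phaseEquiv N z) =
      ∑ i, (-β * siteEnergy a (z i) + bondExponent (finRotate N) a β i z) := by
  have hshift : ∑ i, a * (z ((finRotate N).symm i)).1 ^ 2 = ∑ i, a * (z i).1 ^ 2 :=
    Equiv.sum_comp (finRotate N).symm fun i => a * (z i).1 ^ 2
  calc -β * Ham N a (phaseEquiv N z)
      = ∑ i, (-β * siteEnergy a (z i) + bondExponent (finRotate N) a β i z) +
          -β / 2 * (∑ i, a * (z ((finRotate N).symm i)).1 ^ 2 - ∑ i, a * (z i).1 ^ 2) := by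
        rw [← Finset.sum_sub_distrib, Finset.mul_sum, ← Finset.sum_add_distrib, Ham,
          Finset.mul_sum, Finset.mul_sum]
        refine Finset.sum_congr rfl fun i _ => ?_
        simp only [siteEnergy, bondExponent, phaseEquiv,
          MeasurableEquiv.arrowProdEquivProdArrow, MeasurableEquiv.coe_mk,
          Equiv.arrowProdEquivProdArrow_apply]
        ring
    _ = _ := by rw [hshift, sub_self, mul_zero, add_zero]

lemma pAvg_eq_integral_chainGibbs {N : ℕ} (hβ : 0 < β) (ha : 0 < a) (X : Phase N → ℝ) :
    pAvg N a β X =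
      ∫ z, X (phaseEquiv N z) ∂chainGibbs (finRotate N) a β (siteGibbs a β) := by
  rw [pAvg_eq_integral_tilted, chainGibbs_siteGibbs _ hβ ha]
  simp only [← neg_mul_ham_phaseEquiv]
  exact (integral_tilted_comp (volume_measurePreserving_arrowProdEquivProdArrow ℝ ℝ (Fin N))
    (fun z => -β * Ham N a z) X).symm

end KleinGordon

/-! ### Correlations of polynomials -/

open ProbabilityTheory in
lemma abs_covariance_sum_le {Ω κ κ' : Type*} [MeasurableSpace Ω] {μ : Measure Ω}
    [IsProbabilityMeasure μ] {s : Finset κ} {t : Finset κ'} {X : κ → Ω → ℝ} {Y : κ' → Ω → ℝ}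
    (hX : ∀ i, MemLp (X i) 2 μ) (hY : ∀ j, MemLp (Y j) 2 μ) {C : ℝ}
    (hC : ∀ i ∈ s, ∀ j ∈ t, |cov[X i, Y j; μ]| ≤ C) (c : κ → ℝ) (c' : κ' → ℝ) :
    |cov[fun ω => ∑ i ∈ s, c i * X i ω, fun ω => ∑ j ∈ t, c' j * Y j ω; μ]| ≤
      C * (∑ i ∈ s, |c i|) * ∑ j ∈ t, |c' j| := by
  rw [covariance_fun_sum_fun_sum' (X := fun i ω => c i * X i ω) (Y := fun j ω => c' j * Y j ω)
    (fun i _ => (hX i).const_mul (c i)) fun j _ => (hY j).const_mul (c' j), mul_assoc,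
    Finset.sum_mul_sum, Finset.mul_sum]
  simp only [Finset.mul_sum, covariance_const_mul_left, covariance_const_mul_right]
  refine (Finset.abs_sum_le_sum_abs _ _).trans (Finset.sum_le_sum fun i hi =>
    (Finset.abs_sum_le_sum_abs _ _).trans (Finset.sum_le_sum fun j hj => ?_))
  calc |c' j * (c i * cov[X i, Y j; μ])|
      = |cov[X i, Y j; μ]| * (|c i| * |c' j|) := by rw [abs_mul, abs_mul]; ring
    _ ≤ C * (|c i| * |c' j|) := mul_le_mul_of_nonneg_right (hC i hi j hj) (by positivity)

section Polynomials

open ProbabilityTheory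

variable {N : ℕ} {a β : ℝ}

lemma eval_phaseEquiv (f : Pol N) (z : Fin N → ℝ × ℝ) :
    eval (Sum.elim (phaseEquiv N z).1 (phaseEquiv N z).2) f =
      ∑ e ∈ f.support, coeff e f * siteMonomial e z := by
  rw [eval_eq']
  refine Finset.sum_congr rfl fun e _ => ?_
  rw [Fintype.prod_sum_type, siteMonomial, Finset.prod_mul_distrib]
  rfl

lemma gAvg_mul_sub_gAvg_mul_gAvg (hN : 2 ≤ N) (hβ : 1 ≤ β) (ha : 0 < a) (ha16 : a ≤ 1 / 16)
    (φ ψ : Pol N) :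
    gAvg N a β (φ * ψ) - gAvg N a β φ * gAvg N a β ψ =
      cov[fun z => ∑ e ∈ φ.support, coeff e φ * siteMonomial e z,
        fun z => ∑ e ∈ ψ.support, coeff e ψ * siteMonomial e z;
        chainGibbs (finRotate N) a β (siteGibbs a β)] := by
  have : NeZero N := ⟨by omega⟩
  have hν := hasSiteBounds_siteGibbs hβ ha ha16
  have := hν.isProbabilityMeasure_chainGibbs (finRotate_ne_self hN)
  have hmem (f : Pol N) : MemLp (fun z => ∑ e ∈ f.support, coeff e f * siteMonomial e z) 2
      (chainGibbs (finRotate N) a β (siteGibbs a β)) :=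
    memLp_finsetSum _ fun e _ =>
      (hν.memLp_siteMonomial (finRotate_ne_self hN) e).const_mul (coeff e f)
  rw [covariance_eq_sub (hmem φ) (hmem ψ)]
  simp only [gAvg, pAvg_eq_integral_chainGibbs (one_pos.trans_le hβ) ha, map_mul,
    eval_phaseEquiv, Pi.mul_apply]

end Polynomials

section Exponents

variable {ι : Type*} [Fintype ι] {e : ι ⊕ ι →₀ ℕ}

lemma sum_siteDegree {R : Type*} [CommSemiring R] {f : MvPolynomial (ι ⊕ ι) R} {n : ℕ}
    (hf : f.IsHomogeneous n) (he : e ∈ f.support) : ∑ i, siteDegree e i = n := by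
  have hdeg := hf (mem_support_iff.1 he)
  rw [Finsupp.weight_apply, Finsupp.sum_fintype _ _ (by simp), Fintype.sum_sum_type] at hdeg
  simpa [siteDegree, Finset.sum_add_distrib] using hdeg

lemma siteDegree_eq_zero_of_notMem {N : ℕ} {e : Fin N ⊕ Fin N →₀ ℕ} {i : Fin N}
    (hi : i ∉ siteSupport e) : siteDegree e i = 0 := by
  simpa [siteSupport, siteDegree] using hi

lemma momentBound_siteScale_le {a β : ℝ} (hβ : 0 < β) (ha : a < 1 / 2) {r : ℕ}
    (hr : ∑ i, siteDegree e i = 2 * r) :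
    momentBound (siteScale a β) e ≤ r.factorial * (2 / (β * (1 - 2 * a))) ^ r := by
  have hscale : siteScale a β ^ 2 = 2 / (β * (1 - 2 * a)) :=
    Real.sq_sqrt (div_nonneg zero_le_two (mul_nonneg hβ.le (by linarith)))
  have hΓ : ∏ i, Real.Gamma ((siteDegree e i : ℝ) / 2 + 1) ≤ r.factorial := by
    refine (prod_gamma_add_one_le _ fun i => by positivity).trans_eq ?_
    rw [← Finset.sum_div, ← Nat.cast_sum, hr, Nat.cast_mul, Nat.cast_two,
      mul_div_cancel_left₀ _ two_ne_zero, Real.Gamma_nat_eq_factorial]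
  rw [momentBound, Finset.prod_mul_distrib, Finset.prod_pow_eq_pow_sum, hr, pow_mul, hscale]
  exact mul_le_mul_of_nonneg_right hΓ (hscale ▸ by positivity)

end Exponents

/-- The factor by which two monomials are decorrelated, when the diameters of their supports add up
to `m` and the supports are at distance `d`. -/
noncomputable def decayFactor (a : ℝ) (m d : ℕ) : ℝ :=
  3 * (2 ^ 42 * 256 ^ (2 * (m + 2)) * (2 ^ 20 * a) ^ d)

lemma decayFactor_nonneg {a : ℝ} (ha : 0 ≤ a) (m d : ℕ) : 0 ≤ decayFactor a m d := by
  unfold decayFactor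
  positivity

section Correlations

open ProbabilityTheory

variable {N : ℕ} {a β : ℝ} {p q t u : Fin N}

lemma HasSiteBounds.abs_covariance_siteMonomial_le {ν : Measure (ℝ × ℝ)} {Λ : ℝ}
    {e e' : Fin N ⊕ Fin N →₀ ℕ} (hν : HasSiteBounds ν a β Λ) (ha20 : a ≤ 1 / 2 ^ 20)
    (hpq : p ≤ q) (hqt : q < t) (htu : t ≤ u)
    (he : siteSupport e ⊆ Finset.Icc p q) (he' : siteSupport e' ⊆ Finset.Icc t u) :
    |cov[siteMonomial e, siteMonomial e'; chainGibbs (finRotate N) a β ν]| ≤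
      decayFactor a ((q - p) + (u - t)) (min (t - q - 1 : ℕ) (N - u + p - 1)) *
        (momentBound Λ e * momentBound Λ e') := by
  have : NeZero N := ⟨by omega⟩
  have hσ : ∀ i, finRotate N i ≠ i := finRotate_ne_self (by omega)
  have hcluster := hν.abs_clusterIntegral_finRotate_le ha20 hpq hqt htu
    (fun i hi => siteDegree_eq_zero_of_notMem fun h => hi (he h))
    (fun i hi => siteDegree_eq_zero_of_notMem fun h => hi (he' h))
  have hZ : 0 < (partitionFn (finRotate N) a β ν Finset.univ).toReal :=
    ENNReal.toReal_pos (one_pos.trans_le (hν.one_le_partitionFn_univ hσ)).ne'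
      (hν.partitionFn_ne_top _)
  have hcov := congrArg abs (hν.two_mul_covariance_siteMonomial hσ e e')
  rw [abs_mul, abs_two, abs_div, abs_pow, abs_of_pos hZ, eq_div_iff (by positivity)] at hcov
  refine le_of_mul_le_mul_right ?_ (pow_pos hZ 2)
  refine (mul_le_mul_of_nonneg_right (le_mul_of_one_le_left (abs_nonneg _) one_le_two)
    (sq_nonneg _)).trans (hcov.trans_le (hcluster.trans_eq ?_))
  rw [decayFactor]
  ring

lemma abs_gAvg_mul_sub_gAvg_mul_gAvg_le {r s : ℕ} {φ ψ : Pol N} (hβ : 1 ≤ β) (ha : 0 < a)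
    (ha20 : a ≤ 1 / 2 ^ 20) (hφ : φ.IsHomogeneous (2 * r)) (hψ : ψ.IsHomogeneous (2 * s))
    (hpq : p ≤ q) (hqt : q < t) (htu : t ≤ u)
    (hφpq : ∀ e ∈ φ.support, siteSupport e ⊆ Finset.Icc p q)
    (hψtu : ∀ e ∈ ψ.support, siteSupport e ⊆ Finset.Icc t u) :
    |gAvg N a β (φ * ψ) - gAvg N a β φ * gAvg N a β ψ| ≤
      decayFactor a ((q - p) + (u - t)) (min (t - q - 1 : ℕ) (N - u + p - 1)) *
        (2 ^ (r + s) * r.factorial * s.factorial / ((1 - 2 * a) * β) ^ (r + s)) *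
          pnorm φ * pnorm ψ := by
  have : NeZero N := ⟨by omega⟩
  have hN : 2 ≤ N := by omega
  have ha16 : a ≤ 1 / 16 := ha20.trans (by norm_num)
  have hν := hasSiteBounds_siteGibbs hβ ha ha16
  have := hν.isProbabilityMeasure_chainGibbs (finRotate_ne_self hN)
  have hmoment {f : Pol N} {n : ℕ} (hf : f.IsHomogeneous (2 * n)) {e} (he : e ∈ f.support) :
      momentBound (siteScale a β) e ≤ n.factorial * (2 / (β * (1 - 2 * a))) ^ n :=
    momentBound_siteScale_le (by linarith) (by linarith) (sum_siteDegree hf he)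
  have hfactor : (r.factorial * (2 / (β * (1 - 2 * a))) ^ r) *
      (s.factorial * (2 / (β * (1 - 2 * a))) ^ s) =
        2 ^ (r + s) * r.factorial * s.factorial / ((1 - 2 * a) * β) ^ (r + s) := by
    rw [mul_comm β, div_pow, div_pow, pow_add, pow_add, mul_mul_mul_comm, div_mul_div_comm]
    ring
  rw [gAvg_mul_sub_gAvg_mul_gAvg hN hβ ha ha16]
  refine abs_covariance_sum_le (hν.memLp_siteMonomial (finRotate_ne_self hN))
    (hν.memLp_siteMonomial (finRotate_ne_self hN)) (fun e he e' he' => ?_)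
    (fun e => coeff e φ) (fun e => coeff e ψ)
  refine (hν.abs_covariance_siteMonomial_le ha20 hpq hqt htu (hφpq e he) (hψtu e' he')).trans ?_
  rw [← hfactor]
  gcongr ?_ * ?_
  · exact decayFactor_nonneg ha.le _ _
  · exact mul_le_mul (hmoment hφ he) (hmoment hψ he')
      (momentBound_nonneg hν.scale_nonneg e')
      ((momentBound_nonneg hν.scale_nonneg e).trans (hmoment hφ he))

end Correlations

/-! ### The constants -/

lemma decayFactor_le {a μ C D : ℝ} (ha : 0 ≤ a) (hμ : a ≤ μ) (hC : 1 ≤ C) (hD : 2 ^ 19 ≤ D)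
    (m d : ℕ) : decayFactor a m d ≤ C * D ^ (m + 2 * d + 4) * μ ^ d := by
  have : 0 ≤ D := le_trans (by positivity) hD
  have : 0 ≤ μ := ha.trans hμ
  calc decayFactor a m d = (3 * 2 ^ 42 * 256 ^ 4) * (256 ^ 2) ^ m * (2 ^ 20) ^ d * a ^ d := by
        rw [decayFactor, mul_pow, mul_add, pow_add, pow_mul]
        ring
    _ ≤ D ^ 4 * D ^ m * (D ^ 2) ^ d * μ ^ d := by
        gcongr
        · exact le_trans (by norm_num) (pow_le_pow_left₀ (by norm_num) hD 4)
        · exact le_trans (by norm_num) hD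
        · exact le_trans (by norm_num) (pow_le_pow_left₀ (by norm_num) hD 2)
    _ = 1 * D ^ (m + 2 * d + 4) * μ ^ d := by ring
    _ ≤ C * D ^ (m + 2 * d + 4) * μ ^ d := by gcongr

lemma one_le_rpow_div_pow_mul_pow {K x : ℝ} (hK : 1 ≤ K) (hx0 : 0 < x) (hx : x < 1 / 2) :
    1 ≤ 4 * (2 * K) ^ ((2 : ℝ) + 8 * x) / ((1 - 2 * x) ^ 4 * (1 - x) ^ 6) := by
  have h₁ : 0 < 1 - 2 * x := by linarith
  have h₂ : 0 < 1 - x := by linarith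
  have hnum : 1 ≤ (2 * K) ^ ((2 : ℝ) + 8 * x) :=
    Real.one_le_rpow (by linarith) (by linarith)
  have hden : (1 - 2 * x) ^ 4 * (1 - x) ^ 6 ≤ 1 :=
    mul_le_one₀ (pow_le_one₀ h₁.le (by linarith)) (by positivity) (pow_le_one₀ h₂.le (by linarith))
  rw [one_le_div (by positivity)]
  linarith

lemma le_mul_sqrt_div {K a β : ℝ} (hK : 0 ≤ K) (ha : 0 ≤ a) (hβ : 1 ≤ β) :
    K ≤ K * √(1 + 4 * a) / (1 - 3 / (4 * β ^ 2)) := by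
  have hβ2 : 3 / (4 * β ^ 2) < 1 := by
    rw [div_lt_one (by positivity)]
    nlinarith
  have hsqrt : 1 ≤ √(1 + 4 * a) := Real.one_le_sqrt.2 (by linarith)
  rw [le_div_iff₀ (by linarith)]
  exact mul_le_mul_of_nonneg_left
    ((sub_le_self _ (by positivity)).trans hsqrt) hK

/-- decay of correlations: there exist constants `a0 < 1/2`, `β0`,
`K1 > 2`, independent of the chain length `N`, such that, with
`K2 = 4(2K1)^{2+8a0}/((1−2a0)⁴(1−a0)⁶)`, `μ# = a(2+a)`, `A1 = √(1+4a)`,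
`A2 = √(1−2a)`, `B = 1−3/(4β²)`, `D = K1 A1/B`, for homogeneous polynomials `φ, ψ` of
degrees `2r, 2s` whose (site) supports lie in `{p,…,q}` and `{t,…,u}` respectively
(so with interaction lengths `m = q−p`, `m' = u−t`) and are disjoint at distance
`d = min(t−q−1, N−u+p−1)`, one has for all `β > β0`, `0 < a < a0`:
`|⟨φψ⟩ − ⟨φ⟩⟨ψ⟩| ≤ K2 · D^{m+m'+2d+4} · μ#^d · [2^{r+s} r! s!/(A2²β)^{r+s}] · ‖φ‖‖ψ‖`. -/
theorem stmt13 :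
    ∃ a0 β0 K1 : ℝ, 0 < a0 ∧ a0 < 1 / 2 ∧ 0 < β0 ∧ 2 < K1 ∧
      ∀ (N : ℕ) (a β : ℝ) (r s : ℕ) (φ ψ : Pol N) (p q t u : ℕ)
        (_ha : 0 < a) (_ha0 : a < a0) (_hβ : β0 < β)
        (_hφ : φ.IsHomogeneous (2 * r)) (_hψ : ψ.IsHomogeneous (2 * s))
        (_hpq : p ≤ q) (_hqt : q < t) (_htu : t ≤ u) (_huN : u < N)
        (_hφsupp : ∀ dm ∈ φ.support, ∀ l ∈ siteSupport dm, p ≤ (l : ℕ) ∧ (l : ℕ) ≤ q)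
        (_hψsupp : ∀ dm ∈ ψ.support, ∀ l ∈ siteSupport dm, t ≤ (l : ℕ) ∧ (l : ℕ) ≤ u),
        |gAvg N a β (φ * ψ) - gAvg N a β φ * gAvg N a β ψ| ≤
          (4 * (2 * K1) ^ ((2 : ℝ) + 8 * a0) / ((1 - 2 * a0) ^ 4 * (1 - a0) ^ 6)) *
          (K1 * Real.sqrt (1 + 4 * a) / (1 - 3 / (4 * β ^ 2))) ^
            ((q - p) + (u - t) + 2 * min (t - q - 1) (N - u + p - 1) + 4) *
          (a * (2 + a)) ^ (min (t - q - 1) (N - u + p - 1)) *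
          ((2 : ℝ) ^ (r + s) * (r.factorial : ℝ) * (s.factorial : ℝ) /
            ((1 - 2 * a) * β) ^ (r + s)) *
          pnorm φ * pnorm ψ := by
  refine ⟨1 / 2 ^ 20, 1, 2 ^ 19, by norm_num, by norm_num, one_pos, by norm_num, ?_⟩
  intro N a β r s φ ψ p q t u ha ha0 hβ hφ hψ hpq hqt htu huN hφpq hψtu
  have h2a : 0 < (1 - 2 * a) * β := mul_pos (by linarith) (by linarith)
  have hnorm (f : Pol N) : 0 ≤ pnorm f := Finset.sum_nonneg fun _ _ => abs_nonneg _
  have hfactor : 0 ≤ (2 : ℝ) ^ (r + s) * r.factorial * s.factorial / ((1 - 2 * a) * β) ^ (r + s) :=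
    by positivity
  have hcorr := abs_gAvg_mul_sub_gAvg_mul_gAvg_le (p := ⟨p, by omega⟩) (q := ⟨q, by omega⟩)
    (t := ⟨t, by omega⟩) (u := ⟨u, huN⟩) hβ.le ha ha0.le hφ hψ hpq hqt htu
    (fun e he l hl => Finset.mem_Icc.2 (hφpq e he l hl))
    (fun e he l hl => Finset.mem_Icc.2 (hψtu e he l hl))
  have hdecay := decayFactor_le ha.le (by nlinarith : a ≤ a * (2 + a))
    (one_le_rpow_div_pow_mul_pow (K := 2 ^ 19) (x := 1 / 2 ^ 20) (by norm_num) (by norm_num)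
      (by norm_num))
    (le_mul_sqrt_div (by norm_num) ha.le hβ.le)
    (q - p + (u - t)) (min (t - q - 1) (N - u + p - 1))
  exact hcorr.trans (mul_le_mul_of_nonneg_right (mul_le_mul_of_nonneg_right
    (mul_le_mul_of_nonneg_right hdecay hfactor) (hnorm φ)) (hnorm ψ))
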